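/- For any A ⊂ X, capa_1(I_A ∪ ∂*A) ≤ capa_1(A), where I_A is the measure-theoretic interior of A and ∂*A is the measure-theoretic boundary of A. -/

import Mathlib

open MeasureTheory Filter Metric Set
open scoped Topology ENNReal NNReal symmDiff

noncomputable section

namespace PaperBV

/-- A rectifiable curve parametrized by arc-length: a `1`-Lipschitz map on `[0, len]`. -/
structure Curve (X : Type*) [MetricSpace X] where
  len : ℝ
  len_nonneg : 0 ≤ len
  toFun : ℝ → X
  lip : LipschitzOnWith 1 toFun (Set.Icc 0 len)

variable {X : Type*} [MetricSpace X] [MeasurableSpace X] [BorelSpace X]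

/-- The curve lies in the set `A`. -/
def Curve.In (γ : Curve X) (A : Set X) : Prop :=
  ∀ t ∈ Set.Icc (0 : ℝ) γ.len, γ.toFun t ∈ A

/-- The curve integral `∫_γ g ds` of a nonnegative function, for an
arc-length parametrized curve. -/
def Curve.integral (γ : Curve X) (g : X → ℝ≥0∞) : ℝ≥0∞ :=
  ∫⁻ t in Set.Icc (0 : ℝ) γ.len, g (γ.toFun t)

/-- The upper gradient inequality `|u(x) - u(y)| ≤ ∫_γ g ds` along the curve `γ`,
where `x, y` are the endpoints of `γ`. -/
def UGIneq (u : X → ℝ) (g : X → ℝ≥0∞) (γ : Curve X) : Prop :=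
  ENNReal.ofReal |u (γ.toFun 0) - u (γ.toFun γ.len)| ≤ γ.integral g

/-- `g` is an upper gradient of `u` on `X`: `g` is nonnegative (automatic in `ℝ≥0∞`),
Borel, and the upper gradient inequality holds along every curve. -/
def IsUpperGradient (u : X → ℝ) (g : X → ℝ≥0∞) : Prop :=
  Measurable g ∧ ∀ γ : Curve X, UGIneq u g γ

/-- A family of curves has zero `1`-modulus: there is a nonnegative Borel function
`ρ ∈ L¹(X)` whose curve integral is infinite along every curve of the family. -/
def ZeroMod (μ : Measure X) (Γ : Set (Curve X)) : Prop :=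
  ∃ ρ : X → ℝ≥0∞, Measurable ρ ∧ (∫⁻ x, ρ x ∂μ) < ∞ ∧ ∀ γ ∈ Γ, γ.integral ρ = ∞

/-- `g` is a `1`-weak upper gradient of `u` in `A`: `g` is nonnegative, `μ`-measurable,
and the upper gradient inequality holds along `1`-a.e. curve in `A`. -/
def IsWeakUpperGradientOn (μ : Measure X) (u : X → ℝ) (g : X → ℝ≥0∞) (A : Set X) : Prop :=
  AEMeasurable g μ ∧ ZeroMod μ {γ : Curve X | γ.In A ∧ ¬ UGIneq u g γ}

/-- A nonnegative function `g` belongs to `L¹_loc(A)`. -/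
def LIntegrableLocOn (μ : Measure X) (g : X → ℝ≥0∞) (A : Set X) : Prop :=
  ∀ x ∈ A, ∃ r > (0 : ℝ), (∫⁻ y in A ∩ Metric.ball x r, g y ∂μ) < ∞

/-- `g` is the minimal `1`-weak upper gradient of `u` in `A`: a `1`-weak upper gradient
satisfying `g ≤ g'` `μ`-a.e. in `A` for every `1`-weak upper gradient `g' ∈ L¹_loc(A)`. -/
def IsMinimalWUG (μ : Measure X) (u : X → ℝ) (g : X → ℝ≥0∞) (A : Set X) : Prop :=
  IsWeakUpperGradientOn μ u g A ∧
    ∀ g' : X → ℝ≥0∞, IsWeakUpperGradientOn μ u g' A → LIntegrableLocOn μ g' A →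
      ∀ᵐ x ∂(μ.restrict A), g x ≤ g' x

/-- The Newtonian norm `‖u‖_{N^{1,1}(A)}` (valued in `ℝ≥0∞`). -/
def NNorm (μ : Measure X) (A : Set X) (u : X → ℝ) : ℝ≥0∞ :=
  (∫⁻ x in A, ENNReal.ofReal |u x| ∂μ) +
    ⨅ (g : X → ℝ≥0∞) (_ : IsWeakUpperGradientOn μ u g A), ∫⁻ x in A, g x ∂μ

/-- `u ∈ N^{1,1}(A)`. -/
def MemN11 (μ : Measure X) (A : Set X) (u : X → ℝ) : Prop :=
  NNorm μ A u < ∞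

/-- `u ∈ N^{1,1}_loc(A)`: every point of `A` has a ball `B` with `u ∈ N^{1,1}(A ∩ B)`. -/
def MemN11Loc (μ : Measure X) (A : Set X) (u : X → ℝ) : Prop :=
  ∀ x ∈ A, ∃ r > (0 : ℝ), NNorm μ (A ∩ Metric.ball x r) u < ∞

/-- `u ∈ N^{1,1}(Ω')` for every bounded open `Ω' ⊆ X`. -/
def MemN11LocBounded (μ : Measure X) (u : X → ℝ) : Prop :=
  ∀ Ω' : Set X, IsOpen Ω' → Bornology.IsBounded Ω' → NNorm μ Ω' u < ∞

/-- `u ∈ N^{1,1}_0(Ω)`: `u ∈ N^{1,1}(X)` and `u = 0` outside `Ω`. -/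
def MemN110 (μ : Measure X) (Ω : Set X) (u : X → ℝ) : Prop :=
  MemN11 μ Set.univ u ∧ ∀ x ∉ Ω, u x = 0

/-- The `1`-capacity `capa₁(A) = inf {‖u‖_{N^{1,1}(X)} : u ∈ N^{1,1}(X), u ≥ 1 on A}`. -/
def capa1 (μ : Measure X) (A : Set X) : ℝ≥0∞ :=
  ⨅ (u : X → ℝ) (_ : MemN11 μ Set.univ u) (_ : ∀ x ∈ A, 1 ≤ u x), NNorm μ Set.univ u

/-- `U` is `1`-quasiopen: for every `ε > 0` there is an open `G` with `capa₁(G) < ε`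
such that `U ∪ G` is open. -/
def QuasiOpen (μ : Measure X) (U : Set X) : Prop :=
  ∀ ε : ℝ, 0 < ε → ∃ G : Set X, IsOpen G ∧ capa1 μ G < ENNReal.ofReal ε ∧ IsOpen (U ∪ G)

/-- `u ∈ L¹_loc(A)`. -/
def MemL1Loc (μ : Measure X) (A : Set X) (u : X → ℝ) : Prop :=
  AEMeasurable u (μ.restrict A) ∧
    ∀ x ∈ A, ∃ r > (0 : ℝ), (∫⁻ y in A ∩ Metric.ball x r, ENNReal.ofReal |u y| ∂μ) < ∞

/-- `v i → u` in `L¹_loc(A)`: every `x ∈ A` has a ball `B` with `v i → u` in `L¹(A ∩ B)`. -/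
def L1LocConv (μ : Measure X) (A : Set X) (v : ℕ → X → ℝ) (u : X → ℝ) : Prop :=
  ∀ x ∈ A, ∃ r > (0 : ℝ),
    Filter.Tendsto (fun i => ∫⁻ y in A ∩ Metric.ball x r, ENNReal.ofReal |v i y - u y| ∂μ)
      Filter.atTop (𝓝 0)

/-- `u` is locally Lipschitz on `Ω`. -/
def LocLipOn (u : X → ℝ) (Ω : Set X) : Prop :=
  ∀ x ∈ Ω, ∃ r > (0 : ℝ), ∃ K : ℝ≥0, LipschitzOnWith K u (Ω ∩ Metric.ball x r)

/-- The total variation `‖Du‖(Ω)` of `u` in an open set `Ω`: the infimum of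
`liminf_i ∫_Ω g_{v i} dμ` over sequences of locally Lipschitz functions `v i → u`
in `L¹_loc(Ω)`, where `g_{v i}` is the minimal `1`-weak upper gradient of `v i` in `Ω`. -/
def tvOpen (μ : Measure X) (Ω : Set X) (u : X → ℝ) : ℝ≥0∞ :=
  ⨅ (v : ℕ → X → ℝ) (g : ℕ → X → ℝ≥0∞) (_ : ∀ i, LocLipOn (v i) Ω)
    (_ : ∀ i, IsMinimalWUG μ (v i) (g i) Ω) (_ : L1LocConv μ Ω v u),
    Filter.liminf (fun i => ∫⁻ x in Ω, g i x ∂μ) Filter.atTop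

/-- The total variation `‖Du‖(A)` of `u` in an arbitrary set `A`:
`inf {‖Du‖(Ω) : Ω ⊇ A open}`. -/
def tv (μ : Measure X) (A : Set X) (u : X → ℝ) : ℝ≥0∞ :=
  ⨅ (Ω : Set X) (_ : IsOpen Ω) (_ : A ⊆ Ω), tvOpen μ Ω u

/-- The perimeter `P(E, A) = ‖Dχ_E‖(A)` for arbitrary `A`. -/
def perim (μ : Measure X) (E A : Set X) : ℝ≥0∞ :=
  tv μ A (Set.indicator E (fun _ => (1 : ℝ)))

/-- The perimeter `P(E, Ω) = ‖Dχ_E‖(Ω)` for open `Ω`. -/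
def perimOpen (μ : Measure X) (E Ω : Set X) : ℝ≥0∞ :=
  tvOpen μ Ω (Set.indicator E (fun _ => (1 : ℝ)))

/-- The measure `μ` is doubling with constant `Cd`. -/
def Doubling (μ : Measure X) (Cd : ℝ) : Prop :=
  1 ≤ Cd ∧ ∀ (x : X) (r : ℝ), 0 < r →
    0 < μ (Metric.ball x (2 * r)) ∧
      μ (Metric.ball x (2 * r)) ≤ ENNReal.ofReal Cd * μ (Metric.ball x r) ∧
      μ (Metric.ball x r) < ∞

/-- The space supports a `(1,1)`-Poincaré inequality with constants `CP, lam`. -/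
def Poincare (μ : Measure X) (CP lam : ℝ) : Prop :=
  1 ≤ CP ∧ 1 ≤ lam ∧ ∀ (x : X) (r : ℝ), 0 < r → ∀ (u : X → ℝ) (g : X → ℝ≥0∞),
    MemL1Loc μ Set.univ u → IsUpperGradient u g →
      ENNReal.ofReal (⨍ y in Metric.ball x r, |u y - ⨍ z in Metric.ball x r, u z ∂μ| ∂μ)
        ≤ ENNReal.ofReal (CP * r) *
            ((∫⁻ y in Metric.ball x (lam * r), g y ∂μ) / μ (Metric.ball x (lam * r)))

/-- The restricted spherical Hausdorff content of codimension one. -/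
def HR (μ : Measure X) (R : ℝ) (A : Set X) : ℝ≥0∞ :=
  ⨅ (c : ℕ → X) (r : ℕ → ℝ) (_ : ∀ i, 0 < r i ∧ r i ≤ R)
    (_ : A ⊆ ⋃ i, Metric.ball (c i) (r i)),
    ∑' i, μ (Metric.ball (c i) (r i)) / ENNReal.ofReal (r i)

/-- The codimension-one Hausdorff measure `H(A) = lim_{R → 0} H_R(A)`. -/
def Hcodim (μ : Measure X) (A : Set X) : ℝ≥0∞ :=
  ⨆ (R : ℝ) (_ : 0 < R), HR μ R A

/-- The lower approximate limit `u^∧`. -/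
def lowerApprox (μ : Measure X) (u : X → ℝ) (x : X) : EReal :=
  sSup ((fun t : ℝ => (t : EReal)) ''
    {t : ℝ | Filter.Tendsto
      (fun r => μ (Metric.ball x r ∩ {y | u y < t}) / μ (Metric.ball x r))
      (𝓝[>] (0 : ℝ)) (𝓝 0)})

/-- The upper approximate limit `u^∨`. -/
def upperApprox (μ : Measure X) (u : X → ℝ) (x : X) : EReal :=
  sInf ((fun t : ℝ => (t : EReal)) ''
    {t : ℝ | Filter.Tendsto
      (fun r => μ (Metric.ball x r ∩ {y | t < u y}) / μ (Metric.ball x r))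
      (𝓝[>] (0 : ℝ)) (𝓝 0)})

/-- `u ∈ BV_loc(X)`: `u ∈ L¹_loc(X)` with `‖Du‖(Ω') < ∞` for every bounded open `Ω'`. -/
def MemBVLoc (μ : Measure X) (u : X → ℝ) : Prop :=
  MemL1Loc μ Set.univ u ∧
    ∀ Ω' : Set X, IsOpen Ω' → Bornology.IsBounded Ω' → tvOpen μ Ω' u < ∞

/-- The measure-theoretic interior `I_E`. -/
def mInterior (μ : Measure X) (E : Set X) : Set X :=
  {x | Filter.Tendsto (fun r => μ (Metric.ball x r \ E) / μ (Metric.ball x r))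
    (𝓝[>] (0 : ℝ)) (𝓝 0)}

/-- The measure-theoretic exterior `O_E`. -/
def mExterior (μ : Measure X) (E : Set X) : Set X :=
  {x | Filter.Tendsto (fun r => μ (Metric.ball x r ∩ E) / μ (Metric.ball x r))
    (𝓝[>] (0 : ℝ)) (𝓝 0)}

/-- The measure-theoretic boundary `∂*E`: the points where both `E` and its complement
have positive upper density. -/
def mBoundary (μ : Measure X) (E : Set X) : Set X :=
  {x | 0 < Filter.limsup (fun r => μ (Metric.ball x r ∩ E) / μ (Metric.ball x r))
        (𝓝[>] (0 : ℝ)) ∧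
       0 < Filter.limsup (fun r => μ (Metric.ball x r \ E) / μ (Metric.ball x r))
        (𝓝[>] (0 : ℝ))}

/-
Let `u` be admissible for `A`. Adding to an integrable weak upper gradient of `u` a function whose
integral is infinite along the exceptional curves, and passing to a lower semicontinuous majorant,
yields a genuine integrable upper gradient. Since no measurability of `u` is assumed, it has to be
derived: by Arzelà–Ascoli the truncations of `u` are controlled by distances along discrete chains,
and these are Lipschitz on large sets by the Poincaré inequality.

It remains to cover the points at which `|u| < 1` although `A` has positive upper density by test
functions `ψ` of arbitrarily small norm, because then `|u| + ψ` is admissible for `I_A ∪ ∂*A`. Let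
`w` be a truncation of `u` with values in `[0, 1]` such that `w = 1` on `A`, and consider the points
with `w = 0`.
* At those around which `{w ≤ 1/2}` also has positive upper density, a suitable level set of `w`
  has, by the relative isoperimetric inequality, a lot of perimeter in small balls. As such points
  form a null set, the coarea formula and a covering by balls make the total cost small.
* Around the other ones `v = 1 - 2 w` is nonpositive on half of every small ball. A cutoff of
  `max v 0` at scale `d` costs at most a constant times the integral, over a neighbourhood shrinking
  with `d`, of the upper gradient of `max v 0`; almost everywhere on the intersection of these
  neighbourhoods `v ≤ 0`, where this upper gradient can be taken to vanish.
-/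

/-! ### Curves -/

namespace Curve

section

omit [MeasurableSpace X] [BorelSpace X]

theorem dist_le (γ : Curve X) {s t : ℝ} (hs : s ∈ Icc 0 γ.len) (ht : t ∈ Icc 0 γ.len) :
    dist (γ.toFun s) (γ.toFun t) ≤ |s - t| := by
  simpa [Real.dist_eq] using γ.lip.dist_le_mul s hs t ht

theorem dist_start_le (γ : Curve X) {t : ℝ} (ht : t ∈ Icc 0 γ.len) :
    dist (γ.toFun t) (γ.toFun 0) ≤ t := by
  simpa [abs_of_nonneg ht.1] using γ.dist_le ht (left_mem_Icc.2 γ.len_nonneg)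

theorem dist_end_le (γ : Curve X) {t : ℝ} (ht : t ∈ Icc 0 γ.len) :
    dist (γ.toFun t) (γ.toFun γ.len) ≤ γ.len - t := by
  simpa [abs_of_nonpos (sub_nonpos.2 ht.2)] using γ.dist_le ht (right_mem_Icc.2 γ.len_nonneg)

theorem integral_eq_setLIntegral_Ioc (γ : Curve X) (g : X → ℝ≥0∞) :
    γ.integral g = ∫⁻ t in Ioc 0 γ.len, g (γ.toFun t) :=
  setLIntegral_congr Ioc_ae_eq_Icc.symm

/-- The restriction of a curve to the parameter interval `[a, b]`, shifted to start at `0`. -/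
def subcurve (γ : Curve X) {a b : ℝ} (ha : 0 ≤ a) (hab : a ≤ b) (hb : b ≤ γ.len) : Curve X where
  len := b - a
  len_nonneg := sub_nonneg.2 hab
  toFun t := γ.toFun (a + t)
  lip := LipschitzOnWith.of_dist_le_mul fun s hs t ht => by
    simpa [Real.dist_eq] using γ.dist_le (s := a + s) (t := a + t)
      ⟨by linarith [hs.1], by linarith [hs.2]⟩ ⟨by linarith [ht.1], by linarith [ht.2]⟩

theorem integral_subcurve (γ : Curve X) {a b : ℝ} (ha : 0 ≤ a) (hab : a ≤ b) (hb : b ≤ γ.len)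
    (g : X → ℝ≥0∞) :
    (γ.subcurve ha hab hb).integral g = ∫⁻ t in Ioc a b, g (γ.toFun t) := by
  have shift := (measurePreserving_add_left volume a).setLIntegral_comp_preimage_emb
    (MeasurableEquiv.addLeft a).measurableEmbedding (fun t => g (γ.toFun t)) (Ioc a b)
  simpa [integral_eq_setLIntegral_Ioc, subcurve] using shift

theorem isCompact_times_mem (γ : Curve X) {F : Set X} (hF : IsClosed F) :
    IsCompact {t ∈ Icc 0 γ.len | γ.toFun t ∈ F} :=
  isCompact_Icc.of_isClosed_subset
    (γ.lip.continuousOn.preimage_isClosed_of_isClosed isClosed_Icc hF) (sep_subset _ _)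

end

theorem aemeasurable_comp (γ : Curve X) {g : X → ℝ≥0∞} (hg : Measurable g) :
    AEMeasurable (fun t => g (γ.toFun t)) (volume.restrict (Ioc 0 γ.len)) :=
  (hg.comp_aemeasurable (γ.lip.continuousOn.aemeasurable measurableSet_Icc)).mono_measure
    (Measure.restrict_mono Ioc_subset_Icc_self le_rfl)

end Curve

theorem setLIntegral_Ioc_add {f : ℝ → ℝ≥0∞} {a b c : ℝ} (hab : a ≤ b) (hbc : b ≤ c) :
    (∫⁻ t in Ioc a b, f t) + ∫⁻ t in Ioc b c, f t = ∫⁻ t in Ioc a c, f t := by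
  rw [← Ioc_union_Ioc_eq_Ioc hab hbc,
    lintegral_union measurableSet_Ioc (Ioc_disjoint_Ioc_of_le le_rfl)]

theorem le_setLIntegral_Ioc_of_forall_le_mul {F : ℝ → ℝ≥0∞} {a b : ℝ} (hab : a < b) {D : ℝ≥0∞}
    (h : ∀ t ∈ Ioc a b, D ≤ F t * ENNReal.ofReal (b - a)) : D ≤ ∫⁻ t in Ioc a b, F t := by
  have integrated : ∫⁻ _ in Ioc a b, D ≤ ∫⁻ t in Ioc a b, F t * ENNReal.ofReal (b - a) :=
    setLIntegral_mono' measurableSet_Ioc h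
  rw [lintegral_const, lintegral_mul_const' _ _ ENNReal.ofReal_ne_top,
    Measure.restrict_apply_univ, Real.volume_Ioc] at integrated
  exact (ENNReal.mul_le_mul_iff_left (by simpa using hab) ENNReal.ofReal_ne_top).1 integrated

/-! ### Calculus of upper gradients -/

theorem ofReal_abs_sub_le (a b c : ℝ) :
    ENNReal.ofReal |a - c| ≤ ENNReal.ofReal |a - b| + ENNReal.ofReal |b - c| := by
  rw [← ENNReal.ofReal_add (abs_nonneg _) (abs_nonneg _)]
  exact ENNReal.ofReal_le_ofReal (abs_sub_le _ _ _)

namespace IsUpperGradient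

section

omit [BorelSpace X]

variable {u v : X → ℝ} {g h : X → ℝ≥0∞}

theorem of_forall_le (hg : Measurable g)
    (h : ∀ γ : Curve X, ENNReal.ofReal |u (γ.toFun 0) - u (γ.toFun γ.len)| ≤
      ∫⁻ t in Ioc 0 γ.len, g (γ.toFun t)) : IsUpperGradient u g :=
  ⟨hg, fun γ => (h γ).trans_eq (γ.integral_eq_setLIntegral_Ioc g).symm⟩

theorem le_setLIntegral_Ioc (hu : IsUpperGradient u g) (γ : Curve X) {a b : ℝ} (ha : 0 ≤ a)
    (hab : a ≤ b) (hb : b ≤ γ.len) :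
    ENNReal.ofReal |u (γ.toFun a) - u (γ.toFun b)| ≤ ∫⁻ t in Ioc a b, g (γ.toFun t) := by
  have ugIneq := hu.2 (γ.subcurve ha hab hb)
  rw [UGIneq, γ.integral_subcurve] at ugIneq
  simpa [Curve.subcurve] using ugIneq

theorem le_setLIntegral_len (hu : IsUpperGradient u g) (γ : Curve X) :
    ENNReal.ofReal |u (γ.toFun 0) - u (γ.toFun γ.len)| ≤ ∫⁻ t in Ioc 0 γ.len, g (γ.toFun t) :=
  hu.le_setLIntegral_Ioc γ le_rfl γ.len_nonneg le_rfl

theorem mono (hu : IsUpperGradient u g) (hh : Measurable h) (hle : g ≤ h) :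
    IsUpperGradient u h :=
  of_forall_le hh fun γ => (hu.le_setLIntegral_len γ).trans (lintegral_mono fun _ => hle _)

theorem comp_lipschitz (hu : IsUpperGradient u g) {φ : ℝ → ℝ} {K : ℝ} (hK : 0 ≤ K)
    (hφ : ∀ a b, |φ a - φ b| ≤ K * |a - b|) :
    IsUpperGradient (fun x => φ (u x)) (fun x => ENNReal.ofReal K * g x) := by
  refine of_forall_le (hu.1.const_mul _) fun γ => ?_
  rw [lintegral_const_mul' _ _ ENNReal.ofReal_ne_top]
  calc ENNReal.ofReal |φ (u (γ.toFun 0)) - φ (u (γ.toFun γ.len))|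
      ≤ ENNReal.ofReal (K * |u (γ.toFun 0) - u (γ.toFun γ.len)|) :=
        ENNReal.ofReal_le_ofReal (hφ _ _)
    _ ≤ ENNReal.ofReal K * ∫⁻ t in Ioc 0 γ.len, g (γ.toFun t) := by
        rw [ENNReal.ofReal_mul hK]
        gcongr
        exact hu.le_setLIntegral_len γ

theorem iSup {ι : Type*} [Countable ι] {ψ : ι → X → ℝ} {g : ι → X → ℝ≥0∞}
    (hbdd : ∀ x, BddAbove (range fun i => ψ i x)) (h : ∀ i, IsUpperGradient (ψ i) (g i)) :
    IsUpperGradient (fun x => ⨆ i, ψ i x) (fun x => ∑' i, g i x) := by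
  refine of_forall_le (Measurable.tsum fun i => (h i).1) fun γ => ?_
  rcases isEmpty_or_nonempty ι with _ | _
  · simp
  set I := ∫⁻ t in Ioc 0 γ.len, ∑' i, g i (γ.toFun t)
  rcases eq_or_ne I ∞ with hI | hI
  · exact hI ▸ le_top
  have abs_le (i : ι) : |ψ i (γ.toFun 0) - ψ i (γ.toFun γ.len)| ≤ I.toReal := by
    rw [← ENNReal.ofReal_le_iff_le_toReal hI]
    exact ((h i).le_setLIntegral_len γ).trans (lintegral_mono fun t => ENNReal.le_tsum i)
  rw [ENNReal.ofReal_le_iff_le_toReal hI, abs_sub_le_iff, sub_le_iff_le_add, sub_le_iff_le_add]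
  constructor
  · exact ciSup_le fun i => by
      linarith [(abs_sub_le_iff.1 (abs_le i)).1, le_ciSup (hbdd (γ.toFun γ.len)) i]
  · exact ciSup_le fun i => by
      linarith [(abs_sub_le_iff.1 (abs_le i)).2, le_ciSup (hbdd (γ.toFun 0)) i]

theorem of_short_curves (hg : Measurable g) {η : ℝ} (hη : 0 < η)
    (h : ∀ γ : Curve X, γ.len ≤ η → UGIneq u g γ) : IsUpperGradient u g := by
  refine of_forall_le hg fun γ => ?_
  have initial_segment (n : ℕ) : ∀ b, 0 ≤ b → b ≤ γ.len → b ≤ n * η →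
      ENNReal.ofReal |u (γ.toFun 0) - u (γ.toFun b)| ≤ ∫⁻ t in Ioc 0 b, g (γ.toFun t) := by
    induction n with
    | zero =>
      intro b hb _ hbη
      obtain rfl : b = 0 := le_antisymm (by simpa using hbη) hb
      simp
    | succ n ih =>
      intro b hb hbl hbη
      push_cast at hbη
      set c := max 0 (b - η)
      have hc0 : 0 ≤ c := le_max_left _ _
      have hcb : c ≤ b := max_le hb (by linarith)
      have last_segment := h (γ.subcurve hc0 hcb hbl)
        (sub_le_comm.1 (le_max_right 0 (b - η)))
      rw [UGIneq, γ.integral_subcurve] at last_segment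
      simp only [Curve.subcurve, add_zero, add_sub_cancel] at last_segment
      calc ENNReal.ofReal |u (γ.toFun 0) - u (γ.toFun b)|
          ≤ (∫⁻ t in Ioc 0 c, g (γ.toFun t)) + ∫⁻ t in Ioc c b, g (γ.toFun t) :=
            (ofReal_abs_sub_le _ (u (γ.toFun c)) _).trans (add_le_add
              (ih c hc0 (hcb.trans hbl) (max_le (by positivity) (by linarith))) last_segment)
        _ = ∫⁻ t in Ioc 0 b, g (γ.toFun t) := setLIntegral_Ioc_add hc0 hcb
  obtain ⟨n, hn⟩ := exists_nat_ge (γ.len / η)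
  exact initial_segment n γ.len γ.len_nonneg le_rfl ((div_le_iff₀ hη).1 hn)

theorem of_local_slope (hg : Measurable g) {η : ℝ} (hη : 0 < η)
    (h : ∀ x y, dist x y ≤ η → ENNReal.ofReal |u x - u y| ≤ g x * ENNReal.ofReal (dist x y)) :
    IsUpperGradient u g := by
  refine of_short_curves hg hη fun γ hγ => ?_
  rw [UGIneq, γ.integral_eq_setLIntegral_Ioc]
  rcases γ.len_nonneg.eq_or_lt with hlen | hlen
  · simp [← hlen]
  refine le_setLIntegral_Ioc_of_forall_le_mul hlen fun t ht => ?_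
  have htl : t ∈ Icc 0 γ.len := Ioc_subset_Icc_self ht
  have dist_start := γ.dist_start_le htl
  have dist_end := γ.dist_end_le htl
  calc ENNReal.ofReal |u (γ.toFun 0) - u (γ.toFun γ.len)|
      ≤ ENNReal.ofReal |u (γ.toFun t) - u (γ.toFun 0)| +
          ENNReal.ofReal |u (γ.toFun t) - u (γ.toFun γ.len)| := by
        rw [abs_sub_comm (u (γ.toFun t)) (u (γ.toFun 0))]
        exact ofReal_abs_sub_le _ _ _
    _ ≤ g (γ.toFun t) * ENNReal.ofReal t + g (γ.toFun t) * ENNReal.ofReal (γ.len - t) := by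
        refine add_le_add ((h _ _ (by linarith [htl.2])).trans ?_)
          ((h _ _ (by linarith [htl.1])).trans ?_) <;> gcongr
    _ = g (γ.toFun t) * ENNReal.ofReal (γ.len - 0) := by
        rw [← mul_add, ← ENNReal.ofReal_add htl.1 (sub_nonneg.2 htl.2)]
        ring_nf

theorem of_lipschitz {K : ℝ} (h : ∀ x y, |u x - u y| ≤ K * dist x y) :
    IsUpperGradient u (fun _ => ENNReal.ofReal K) :=
  of_local_slope measurable_const one_pos fun x y _ => by
    rw [← ENNReal.ofReal_mul' dist_nonneg]
    exact ENNReal.ofReal_le_ofReal (h x y)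

end

variable {u : X → ℝ} {g : X → ℝ≥0∞}

theorem abs_mul_sub_mul_le {a b c d k : ℝ} (ha : |a| ≤ 1) (hab : |a - b| ≤ k) :
    |a * c - b * d| ≤ |c - d| + k * |d| := by
  calc |a * c - b * d| = |a * (c - d) + (a - b) * d| := by ring_nf
    _ ≤ |a| * |c - d| + |a - b| * |d| := by
      rw [← abs_mul, ← abs_mul]
      exact abs_add_le _ _
    _ ≤ |c - d| + k * |d| :=
      add_le_add (mul_le_of_le_one_left (abs_nonneg _) ha) (by gcongr)

theorem mul_cutoff (hu : IsUpperGradient u g) {χ : X → ℝ} {K : ℝ} (hK : 0 ≤ K)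
    (hχ : ∀ x, |χ x| ≤ 1) (hχK : ∀ x y, |χ x - χ y| ≤ K * dist x y) {H : X → ℝ≥0∞}
    (hH : Measurable H) (huH : ∀ x, ENNReal.ofReal |u x| ≤ H x) :
    IsUpperGradient (fun x => χ x * u x) (fun x => g x + ENNReal.ofReal K * H x) := by
  refine of_forall_le (hu.1.add (hH.const_mul _)) fun γ => ?_
  rw [lintegral_add_left' (γ.aemeasurable_comp hu.1), ← tsub_le_iff_left]
  rcases γ.len_nonneg.eq_or_lt with hlen | hlen
  · simp [← hlen]
  refine le_setLIntegral_Ioc_of_forall_le_mul hlen fun t ht => ?_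
  rw [tsub_le_iff_left, sub_zero]
  have htl : t ∈ Icc 0 γ.len := Ioc_subset_Icc_self ht
  set p := γ.toFun 0
  set q := γ.toFun γ.len
  set z := γ.toFun t
  have hpz : |χ p - χ z| ≤ K * t := by
    rw [abs_sub_comm]
    exact (hχK z p).trans (mul_le_mul_of_nonneg_left (γ.dist_start_le htl) hK)
  have hqz : |χ q - χ z| ≤ K * (γ.len - t) := by
    rw [abs_sub_comm]
    exact (hχK z q).trans (mul_le_mul_of_nonneg_left (γ.dist_end_le htl) hK)
  have through_z : |χ p * u p - χ q * u q| ≤ |u p - u z| + |u z - u q| + K * γ.len * |u z| := by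
    have start := abs_mul_sub_mul_le (c := u p) (d := u z) (hχ p) hpz
    have finish := abs_mul_sub_mul_le (c := u q) (d := u z) (hχ q) hqz
    rw [abs_sub_comm, abs_sub_comm (u q)] at finish
    linarith [abs_sub_le (χ p * u p) (χ z * u z) (χ q * u q)]
  calc ENNReal.ofReal |χ p * u p - χ q * u q|
      ≤ ENNReal.ofReal |u p - u z| + ENNReal.ofReal |u z - u q| +
          ENNReal.ofReal (K * γ.len * |u z|) := by
        rw [← ENNReal.ofReal_add (by positivity) (by positivity),
          ← ENNReal.ofReal_add (by positivity) (by positivity)]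
        exact ENNReal.ofReal_le_ofReal through_z
    _ ≤ (∫⁻ s in Ioc 0 t, g (γ.toFun s)) + (∫⁻ s in Ioc t γ.len, g (γ.toFun s)) +
          ENNReal.ofReal K * H z * ENNReal.ofReal γ.len := by
        rw [ENNReal.ofReal_mul (by positivity), ENNReal.ofReal_mul hK, mul_right_comm]
        gcongr
        · exact hu.le_setLIntegral_Ioc γ le_rfl htl.1 htl.2
        · exact hu.le_setLIntegral_Ioc γ htl.1 htl.2 le_rfl
        · exact huH z
    _ = _ := by rw [setLIntegral_Ioc_add htl.1 htl.2]

theorem indicator_of_isOpen (hu : IsUpperGradient u g) {V : Set X} (hV : IsOpen V)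
    (huV : ∀ x ∉ V, u x = 0) : IsUpperGradient u (V.indicator g) := by
  refine of_forall_le (hu.1.indicator hV.measurableSet) fun γ => ?_
  by_cases hγ : γ.In V
  · refine (hu.le_setLIntegral_len γ).trans (setLIntegral_mono' measurableSet_Ioc fun t ht => ?_)
    rw [indicator_of_mem (hγ t (Ioc_subset_Icc_self ht))]
  obtain ⟨t₀, ht₀, ht₀V⟩ : ∃ t ∈ Icc 0 γ.len, γ.toFun t ∉ V := by
    simpa only [Curve.In, not_forall, exists_prop] using hγ
  have exits := γ.isCompact_times_mem hV.isClosed_compl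
  obtain ⟨a, ⟨ha, haV⟩, first⟩ := exits.exists_isLeast ⟨t₀, ht₀, ht₀V⟩
  obtain ⟨b, ⟨hb, hbV⟩, last⟩ := exits.exists_isGreatest ⟨t₀, ht₀, ht₀V⟩
  have before : ENNReal.ofReal |u (γ.toFun 0)| ≤
      ∫⁻ t in Ioc 0 a, V.indicator g (γ.toFun t) := by
    have := hu.le_setLIntegral_Ioc γ le_rfl ha.1 ha.2
    rw [huV _ haV, sub_zero] at this
    rw [setLIntegral_congr Ioo_ae_eq_Ioc.symm] at this ⊢
    refine this.trans (setLIntegral_mono' measurableSet_Ioo fun t ht => ?_)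
    rw [indicator_of_mem]
    by_contra htV
    exact ht.2.not_ge (first ⟨⟨ht.1.le, ht.2.le.trans ha.2⟩, htV⟩)
  have after : ENNReal.ofReal |u (γ.toFun γ.len)| ≤
      ∫⁻ t in Ioc b γ.len, V.indicator g (γ.toFun t) := by
    have := hu.le_setLIntegral_Ioc γ hb.1 hb.2 le_rfl
    rw [huV _ hbV, zero_sub, abs_neg] at this
    refine this.trans (setLIntegral_mono' measurableSet_Ioc fun t ht => ?_)
    rw [indicator_of_mem]
    by_contra htV
    exact ht.1.not_ge (last ⟨⟨hb.1.trans ht.1.le, ht.2⟩, htV⟩)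
  calc ENNReal.ofReal |u (γ.toFun 0) - u (γ.toFun γ.len)|
      ≤ ENNReal.ofReal |u (γ.toFun 0)| + ENNReal.ofReal |u (γ.toFun γ.len)| := by
        simpa using ofReal_abs_sub_le (u (γ.toFun 0)) 0 (u (γ.toFun γ.len))
    _ ≤ (∫⁻ t in Ioc 0 a, V.indicator g (γ.toFun t)) +
          ∫⁻ t in Ioc a γ.len, V.indicator g (γ.toFun t) :=
        add_le_add before (after.trans
          (lintegral_mono_set (Ioc_subset_Ioc_left (first ⟨hb, hbV⟩))))
    _ = ∫⁻ t in Ioc 0 γ.len, V.indicator g (γ.toFun t) := setLIntegral_Ioc_add ha.1 ha.2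

end IsUpperGradient

/-! ### Truncation and locality of upper gradients -/

/-- Truncation of a real number to the interval `[0, 1]`. -/
def clamp (a : ℝ) : ℝ := max 0 (min 1 a)

theorem clamp_nonneg (a : ℝ) : 0 ≤ clamp a := le_max_left _ _

theorem clamp_le_one (a : ℝ) : clamp a ≤ 1 := max_le zero_le_one (min_le_left _ _)

theorem clamp_mem_Icc (a : ℝ) : clamp a ∈ Icc 0 1 := ⟨clamp_nonneg a, clamp_le_one a⟩

theorem clamp_of_nonpos {a : ℝ} (h : a ≤ 0) : clamp a = 0 :=
  max_eq_left ((min_le_right _ _).trans h)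

theorem clamp_of_one_le {a : ℝ} (h : 1 ≤ a) : clamp a = 1 := by
  simp [clamp, min_eq_left h]

theorem mem_Ioo_of_clamp_mem_Ioo {a : ℝ} (h : clamp a ∈ Ioo 0 1) : a ∈ Ioo 0 1 := by
  constructor <;> by_contra! ha
  · exact h.1.ne' (clamp_of_nonpos ha)
  · exact h.2.ne (clamp_of_one_le ha)

theorem abs_clamp_sub_clamp_le (a b : ℝ) : |clamp a - clamp b| ≤ |a - b| := by
  refine (abs_max_sub_max_le_max _ _ _ _).trans (max_le (by simp) ?_)
  exact (abs_min_sub_min_le_max _ _ _ _).trans (by simp)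

theorem continuous_clamp : Continuous clamp := by
  unfold clamp
  fun_prop

theorem exists_upcrossing {F : ℝ → ℝ} {a b : ℝ} (hab : a ≤ b) (hF : ContinuousOn F (Icc a b)) :
    ∃ s s', a ≤ s ∧ s ≤ s' ∧ s' ≤ b ∧ F s ≤ F a ∧ F b ≤ F s' ∧
      ∀ τ ∈ Ioo s s', F τ ∈ Ioo (F a) (F b) := by
  have low : IsCompact {τ ∈ Icc a b | F τ ≤ F a} := isCompact_Icc.of_isClosed_subset
    (hF.preimage_isClosed_of_isClosed isClosed_Icc isClosed_Iic) (sep_subset _ _)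
  obtain ⟨s, ⟨hs, hFs⟩, last⟩ := low.exists_isGreatest ⟨a, left_mem_Icc.2 hab, le_rfl⟩
  have high : IsCompact {τ ∈ Icc s b | F b ≤ F τ} := isCompact_Icc.of_isClosed_subset
    ((hF.mono (Icc_subset_Icc_left hs.1)).preimage_isClosed_of_isClosed isClosed_Icc isClosed_Ici)
    (sep_subset _ _)
  obtain ⟨s', ⟨hs', hFs'⟩, first⟩ := high.exists_isLeast ⟨b, right_mem_Icc.2 hs.2, le_rfl⟩
  refine ⟨s, s', hs.1, hs'.1, hs'.2, hFs, hFs', fun τ hτ => ⟨?_, ?_⟩⟩ <;> by_contra! hFτ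
  · exact hτ.1.not_ge (last ⟨⟨hs.1.trans hτ.1.le, hτ.2.le.trans hs'.2⟩, hFτ⟩)
  · exact hτ.2.not_ge (first ⟨⟨hτ.1.le, hτ.2.le.trans hs'.2⟩, hFτ⟩)

theorem exists_crossing {F : ℝ → ℝ} {a b p q : ℝ} (hab : a ≤ b) (hF : ContinuousOn F (Icc a b))
    (ha : F a ∈ Icc p q) (hb : F b ∈ Icc p q) :
    ∃ s s', a ≤ s ∧ s ≤ s' ∧ s' ≤ b ∧ |F a - F b| ≤ |F s - F s'| ∧
      ∀ τ ∈ Ioo s s', F τ ∈ Ioo p q := by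
  rcases le_total (F a) (F b) with hle | hge
  · obtain ⟨s, s', has, hss', hs'b, hFs, hFs', between⟩ := exists_upcrossing hab hF
    refine ⟨s, s', has, hss', hs'b, ?_, fun τ hτ => Ioo_subset_Ioo ha.1 hb.2 (between τ hτ)⟩
    rw [abs_sub_comm (F a), abs_sub_comm (F s), abs_of_nonneg (sub_nonneg.2 hle)]
    exact (sub_le_sub hFs' hFs).trans (le_abs_self _)
  · obtain ⟨s, s', has, hss', hs'b, hFs, hFs', between⟩ := exists_upcrossing hab hF.neg
    refine ⟨s, s', has, hss', hs'b, ?_, fun τ hτ => ?_⟩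
    · rw [abs_of_nonneg (sub_nonneg.2 hge)]
      exact (sub_le_sub (neg_le_neg_iff.1 hFs) (neg_le_neg_iff.1 hFs')).trans (le_abs_self _)
    · obtain ⟨below, above⟩ := between τ hτ
      exact ⟨hb.1.trans_lt (neg_lt_neg_iff.1 above), (neg_lt_neg_iff.1 below).trans_le ha.2⟩

omit [MetricSpace X] [BorelSpace X] in
theorem exists_measurable_ge_of_aemeasurable {μ : Measure X} {f : X → ℝ≥0∞}
    (hf : AEMeasurable f μ) : ∃ F, Measurable F ∧ f ≤ F ∧ F =ᵐ[μ] f := by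
  set Z := toMeasurable μ {x | f x ≠ hf.mk f x}
  have hZ : ∀ᵐ x ∂μ, x ∉ Z := measure_eq_zero_iff_ae_notMem.1
    ((measure_toMeasurable _).trans hf.ae_eq_mk)
  refine ⟨fun x => hf.mk f x + Z.indicator (fun _ => ∞) x, hf.measurable_mk.add
    (measurable_const.indicator (measurableSet_toMeasurable _ _)), fun x => ?_, ?_⟩
  · by_cases hx : x ∈ Z
    · simp [hx]
    · have eq_mk : f x = hf.mk f x := by
        by_contra hne
        exact hx (subset_toMeasurable _ _ hne)
      exact eq_mk.le.trans le_self_add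
  · filter_upwards [hZ, hf.ae_eq_mk] with x hx eq_mk
    simp [hx, eq_mk]

namespace IsUpperGradient

section

omit [BorelSpace X]

variable {w : X → ℝ} {ρ : X → ℝ≥0∞}

theorem ofReal_abs_sub_le_uIoc (hw : IsUpperGradient w ρ) (γ : Curve X) {s t : ℝ}
    (hs : s ∈ Icc 0 γ.len) (ht : t ∈ Icc 0 γ.len) :
    ENNReal.ofReal |w (γ.toFun s) - w (γ.toFun t)| ≤ ∫⁻ τ in uIoc s t, ρ (γ.toFun τ) := by
  rcases le_total s t with hst | hst
  · rw [uIoc_of_le hst]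
    exact hw.le_setLIntegral_Ioc γ hs.1 hst ht.2
  · rw [uIoc_of_ge hst, abs_sub_comm]
    exact hw.le_setLIntegral_Ioc γ ht.1 hst hs.2

theorem continuousOn_comp_curve (hw : IsUpperGradient w ρ) (γ : Curve X)
    (hfin : ∫⁻ t in Ioc 0 γ.len, ρ (γ.toFun t) ≠ ∞) :
    ContinuousOn (fun t => w (γ.toFun t)) (Icc 0 γ.len) := by
  intro t ht
  rw [Metric.continuousWithinAt_iff']
  intro ε hε
  have length_tendsto : Tendsto (fun s => volume.restrict (Ioc 0 γ.len) (uIoc s t)) (𝓝 t)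
      (𝓝 0) := by
    have : Continuous fun s : ℝ => ENNReal.ofReal |t - s| :=
      ENNReal.continuous_ofReal.comp (by fun_prop)
    refine tendsto_of_tendsto_of_tendsto_of_le_of_le tendsto_const_nhds
      (by simpa using this.tendsto t) (fun _ => bot_le) fun s => ?_
    exact (Measure.restrict_apply_le _ _).trans_eq Real.volume_uIoc
  have integral_lt := (tendsto_setLIntegral_zero hfin length_tendsto).eventually_lt_const
    (ENNReal.ofReal_pos.2 hε)
  filter_upwards [nhdsWithin_le_nhds integral_lt, self_mem_nhdsWithin] with s hlt hs
  have hsub : uIoc s t ⊆ Ioc 0 γ.len := by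
    rw [uIoc]
    exact Ioc_subset_Ioc (le_min hs.1 ht.1) (max_le hs.2 ht.2)
  rw [Measure.restrict_restrict measurableSet_uIoc, inter_eq_left.2 hsub] at hlt
  rw [Real.dist_eq, ← ENNReal.ofReal_lt_ofReal_iff hε]
  exact (hw.ofReal_abs_sub_le_uIoc γ hs ht).trans_lt hlt

theorem clamp_of_le {G : X → ℝ≥0∞} (hw : IsUpperGradient w ρ) (hG : Measurable G) {δ : ℝ≥0∞}
    (hδ : δ ≠ 0) (hδG : ∀ x, δ * ρ x ≤ G x) (hρG : ∀ x, w x ∈ Ioo 0 1 → ρ x ≤ G x) :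
    IsUpperGradient (fun x => clamp (w x)) G := by
  refine of_forall_le hG fun γ => ?_
  rcases eq_or_ne (∫⁻ t in Ioc 0 γ.len, ρ (γ.toFun t)) ∞ with htop | hfin
  · refine le_top.trans (le_trans ?_ (lintegral_mono fun t => hδG (γ.toFun t)))
    calc ∞ = δ * ∫⁻ t in Ioc 0 γ.len, ρ (γ.toFun t) := by rw [htop, ENNReal.mul_top hδ]
      _ ≤ ∫⁻ t in Ioc 0 γ.len, δ * ρ (γ.toFun t) := lintegral_const_mul_le _ _
  obtain ⟨s, s', hs, hss', hs', hle, between⟩ := exists_crossing γ.len_nonneg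
    (continuous_clamp.comp_continuousOn (hw.continuousOn_comp_curve γ hfin))
    (clamp_mem_Icc _) (clamp_mem_Icc _)
  calc ENNReal.ofReal |clamp (w (γ.toFun 0)) - clamp (w (γ.toFun γ.len))|
      ≤ ENNReal.ofReal |w (γ.toFun s) - w (γ.toFun s')| :=
        ENNReal.ofReal_le_ofReal (hle.trans (abs_clamp_sub_clamp_le _ _))
    _ ≤ ∫⁻ τ in Ioo s s', ρ (γ.toFun τ) :=
        (hw.le_setLIntegral_Ioc γ hs hss' hs').trans_eq (setLIntegral_congr Ioo_ae_eq_Ioc.symm)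
    _ ≤ ∫⁻ τ in Ioo s s', G (γ.toFun τ) := setLIntegral_mono' measurableSet_Ioo fun τ hτ =>
        hρG _ (mem_Ioo_of_clamp_mem_Ioo (between τ hτ))
    _ ≤ ∫⁻ τ in Ioc 0 γ.len, G (γ.toFun τ) :=
        lintegral_mono_set fun τ hτ => ⟨hs.trans_lt hτ.1, hτ.2.le.trans hs'⟩

theorem exists_clamp_of_aemeasurable {μ : Measure X} (hw : IsUpperGradient w ρ)
    (hm : AEMeasurable w μ) {δ : ℝ≥0∞} (hδ : δ ≠ 0) :
    ∃ G, IsUpperGradient (fun x => clamp (w x)) G ∧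
      G =ᵐ[μ] fun x => (w ⁻¹' Ioo 0 1).indicator ρ x + δ * ρ x := by
  have locality : AEMeasurable (fun x => (w ⁻¹' Ioo 0 1).indicator ρ x + δ * ρ x) μ :=
    (hw.1.aemeasurable.indicator₀ (hm.nullMeasurableSet_preimage measurableSet_Ioo)).add
      (hw.1.const_mul δ).aemeasurable
  obtain ⟨G, hG, hle, hae⟩ := exists_measurable_ge_of_aemeasurable locality
  refine ⟨G, hw.clamp_of_le hG hδ (fun x => le_add_self.trans (hle x)) fun x hx => ?_, hae⟩
  exact (indicator_of_mem (s := w ⁻¹' Ioo 0 1) hx ρ).ge.trans (le_self_add.trans (hle x))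

end

end IsUpperGradient

/-! ### Doubling measures and the Poincaré inequality -/

namespace Doubling

variable {μ : Measure X} {Cd : ℝ}

section

omit [BorelSpace X]

theorem measure_ball_ne_zero (hμ : Doubling μ Cd) (x : X) {r : ℝ} (hr : 0 < r) :
    μ (ball x r) ≠ 0 := by
  have h := (hμ.2 x (r / 2) (by positivity)).1
  rw [mul_div_cancel₀ _ two_ne_zero] at h
  exact h.ne'

theorem measure_ball_ne_top (hμ : Doubling μ Cd) (x : X) (r : ℝ) : μ (ball x r) ≠ ∞ := by
  rcases le_or_gt r 0 with hr | hr
  · simp [ball_eq_empty.2 hr]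
  · exact (hμ.2 x r hr).2.2.ne

theorem measure_ball_two_mul_le (hμ : Doubling μ Cd) (x : X) (r : ℝ) :
    μ (ball x (2 * r)) ≤ ENNReal.ofReal Cd * μ (ball x r) := by
  rcases le_or_gt r 0 with hr | hr
  · simp [ball_eq_empty.2 (show 2 * r ≤ 0 by linarith)]
  · exact (hμ.2 x r hr).2.1

theorem measure_ball_two_pow_mul_le (hμ : Doubling μ Cd) (n : ℕ) (x : X) (r : ℝ) :
    μ (ball x (2 ^ n * r)) ≤ ENNReal.ofReal Cd ^ n * μ (ball x r) := by
  induction n with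
  | zero => simp
  | succ n ih =>
    rw [pow_succ' (2 : ℝ), mul_assoc, pow_succ', mul_assoc]
    exact (hμ.measure_ball_two_mul_le _ _).trans (mul_le_mul_right ih _)

theorem measure_ball_le_of_dist_add_le (hμ : Doubling μ Cd) (n : ℕ) {x y : X} {r s : ℝ}
    (h : dist x y + s ≤ 2 ^ n * r) :
    μ (ball y s) ≤ ENNReal.ofReal Cd ^ n * μ (ball x r) := by
  refine (measure_mono (ball_subset_ball' ?_)).trans (hμ.measure_ball_two_pow_mul_le n x r)
  rwa [dist_comm, add_comm]

theorem isUnifLocDoublingMeasure (hμ : Doubling μ Cd) : IsUnifLocDoublingMeasure μ := by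
  refine ⟨⟨Cd.toNNReal ^ 2, ?_⟩⟩
  filter_upwards [self_mem_nhdsWithin] with ε (hε : 0 < ε) x
  calc μ (closedBall x (2 * ε))
    _ ≤ μ (ball x (2 ^ 2 * ε)) := measure_mono (closedBall_subset_ball (by linarith))
    _ ≤ ENNReal.ofReal Cd ^ 2 * μ (ball x ε) := hμ.measure_ball_two_pow_mul_le 2 x ε
    _ ≤ ↑(Cd.toNNReal ^ 2) * μ (closedBall x ε) := by
      rw [ENNReal.coe_pow]
      exact mul_le_mul_right (measure_mono ball_subset_closedBall) _

theorem isLocallyFiniteMeasure (hμ : Doubling μ Cd) : IsLocallyFiniteMeasure μ :=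
  ⟨fun x => ⟨ball x 1, ball_mem_nhds x one_pos, (hμ.measure_ball_ne_top x 1).lt_top⟩⟩

end

theorem exists_dist_lt_of_seq (hμ : Doubling μ Cd) {x : X} {R ε : ℝ} (hε : 0 < ε) {f : ℕ → X}
    (hf : ∀ i, f i ∈ ball x R) : ∃ i j, i < j ∧ dist (f i) (f j) < ε := by
  by_contra! separated
  have hR : 0 < R := pos_of_mem_ball (hf 0)
  obtain ⟨n, hn⟩ := pow_unbounded_of_one_lt ((R + (R + ε)) / (ε / 2)) one_lt_two
  rw [div_lt_iff₀ (by positivity)] at hn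
  have large (i) : μ (ball x (R + ε)) / ENNReal.ofReal Cd ^ n ≤ μ (ball (f i) (ε / 2)) := by
    refine ENNReal.div_le_of_le_mul' (hμ.measure_ball_le_of_dist_add_le n ?_)
    linarith [mem_ball.1 (hf i)]
  have disjoint_of_lt {i j} (hij : i < j) : Disjoint (ball (f i) (ε / 2)) (ball (f j) (ε / 2)) :=
    ball_disjoint_ball (by linarith [separated i j hij])
  have disjoint : Pairwise (Function.onFun Disjoint fun i => ball (f i) (ε / 2)) := fun i j hij =>
    hij.lt_or_gt.elim disjoint_of_lt fun hji => (disjoint_of_lt hji).symm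
  have inside : ⋃ i, ball (f i) (ε / 2) ⊆ ball x (R + ε) :=
    iUnion_subset fun i => ball_subset_ball' (by linarith [mem_ball.1 (hf i)])
  have finite := Measure.finite_const_le_meas_of_disjoint_iUnion μ
    (ε := μ (ball x (R + ε)) / ENNReal.ofReal Cd ^ n)
    (ENNReal.div_pos (hμ.measure_ball_ne_zero x (by positivity))
      (ENNReal.pow_ne_top ENNReal.ofReal_ne_top))
    (fun _ => measurableSet_ball) disjoint
    (measure_ne_top_of_subset inside (hμ.measure_ball_ne_top x (R + ε)))
  exact infinite_univ (finite.subset fun i _ => large i)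

theorem totallyBounded_ball (hμ : Doubling μ Cd) (x : X) (R : ℝ) : TotallyBounded (ball x R) := by
  rw [Metric.totallyBounded_iff]
  by_contra! ⟨ε, hε, uncovered⟩
  have extend (s : Finset X) : ∃ y ∈ ball x R, ∀ z ∈ s, ε ≤ dist z y := by
    obtain ⟨y, hy, hys⟩ := not_subset.1 (uncovered s s.finite_toSet)
    simp only [mem_iUnion, not_exists, mem_ball, not_lt] at hys
    exact ⟨y, hy, fun z hz => dist_comm y z ▸ hys z hz⟩
  obtain ⟨f, hf, separated⟩ := exists_seq_of_forall_finset_exists (· ∈ ball x R)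
    (fun y z => ε ≤ dist y z) fun s _ => extend s
  obtain ⟨i, j, hij, hlt⟩ := hμ.exists_dist_lt_of_seq hε hf
  exact (separated i j hij).not_gt hlt

theorem properSpace [CompleteSpace X] (hμ : Doubling μ Cd) : ProperSpace X :=
  ⟨fun x r => isCompact_iff_totallyBounded_isComplete.2
    ⟨(hμ.totallyBounded_ball x (r + 1)).subset (closedBall_subset_ball (by linarith)),
      isClosed_closedBall.isComplete⟩⟩

end Doubling

/-- The `(1,1)`-Poincaré inequality for functions with values in `[0, 1]`, multiplied through by the
measure of the ball, with an unspecified constant in place of the mean value and with a power of two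
as dilation factor. -/
def UnitPoincare (μ : Measure X) (P : ℝ≥0) (L : ℕ) : Prop :=
  ∀ (x : X) (r : ℝ), 0 < r → ∀ (u : X → ℝ) (g : X → ℝ≥0∞), AEMeasurable u μ →
    (∀ x, u x ∈ Icc 0 1) → IsUpperGradient u g →
    ∃ c : ℝ, ∫⁻ y in ball x r, ENNReal.ofReal |u y - c| ∂μ ≤
      P * ENNReal.ofReal r * ∫⁻ y in ball x (2 ^ L * r), g y ∂μ

section

omit [BorelSpace X]

variable {μ : Measure X}

theorem memL1Loc_univ_of_mem_Icc [IsLocallyFiniteMeasure μ] {u : X → ℝ} (hu : AEMeasurable u μ)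
    (hu01 : ∀ x, u x ∈ Icc 0 1) : MemL1Loc μ univ u := by
  refine ⟨hu.restrict, fun x _ => ?_⟩
  obtain ⟨r, hr, hfin⟩ := μ.finiteAt_nhds x |>.exists_mem_basis nhds_basis_ball
  refine ⟨r, hr, ?_⟩
  calc ∫⁻ y in univ ∩ ball x r, ENNReal.ofReal |u y| ∂μ
    _ ≤ ∫⁻ _ in univ ∩ ball x r, 1 ∂μ := by
      refine lintegral_mono fun y => ?_
      rw [abs_of_nonneg (hu01 y).1]
      exact ENNReal.ofReal_le_one.2 (hu01 y).2
    _ < ∞ := by simpa using hfin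

theorem setLIntegral_ofReal_eq_measure_mul_ofReal_setAverage {Y : Type*} [MeasurableSpace Y]
    {ν : Measure Y} {s : Set Y} (hs : ν s ≠ 0) (hs' : ν s ≠ ∞) {f : Y → ℝ}
    (hf : IntegrableOn f s ν) (hf0 : ∀ x, 0 ≤ f x) :
    ∫⁻ x in s, ENNReal.ofReal (f x) ∂ν = ν s * ENNReal.ofReal (⨍ x in s, f x ∂ν) := by
  rw [setAverage_eq, smul_eq_mul, ENNReal.ofReal_mul (by positivity), measureReal_def,
    ← ENNReal.toReal_inv, ENNReal.ofReal_toReal (ENNReal.inv_ne_top.2 hs), ← mul_assoc,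
    ENNReal.mul_inv_cancel hs hs', one_mul,
    ofReal_integral_eq_lintegral_ofReal hf (ae_of_all _ hf0)]

theorem Poincare.exists_unitPoincare {CP lam Cd : ℝ} (hP : Poincare μ CP lam)
    (hμ : Doubling μ Cd) : ∃ L, UnitPoincare μ CP.toNNReal L := by
  obtain ⟨hCP, hlam, poincare⟩ := hP
  have := hμ.isLocallyFiniteMeasure
  obtain ⟨L, hL⟩ := pow_unbounded_of_one_lt lam one_lt_two
  refine ⟨L, fun x r hr u g hu hu01 hg => ⟨⨍ z in ball x r, u z ∂μ, ?_⟩⟩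
  set c := ⨍ z in ball x r, u z ∂μ
  have finite_ball : IsFiniteMeasure (μ.restrict (ball x r)) :=
    ⟨by simpa using (hμ.measure_ball_ne_top x r).lt_top⟩
  have integrable : IntegrableOn (fun y => |u y - c|) (ball x r) μ := by
    refine ((Integrable.of_bound hu.restrict.aestronglyMeasurable 1 ?_).sub
      (integrable_const c)).abs
    exact ae_of_all _ fun y => by rw [Real.norm_of_nonneg (hu01 y).1]; exact (hu01 y).2
  rw [setLIntegral_ofReal_eq_measure_mul_ofReal_setAverage (hμ.measure_ball_ne_zero x hr)
    (hμ.measure_ball_ne_top x r) integrable fun _ => abs_nonneg _]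
  calc μ (ball x r) * ENNReal.ofReal (⨍ y in ball x r, |u y - c| ∂μ)
    _ ≤ μ (ball x (lam * r)) * (ENNReal.ofReal (CP * r) *
          ((∫⁻ y in ball x (lam * r), g y ∂μ) / μ (ball x (lam * r)))) :=
      mul_le_mul' (measure_mono (ball_subset_ball (le_mul_of_one_le_left hr.le hlam)))
        (poincare x r hr u g (memL1Loc_univ_of_mem_Icc hu hu01) hg)
    _ ≤ ENNReal.ofReal (CP * r) * ∫⁻ y in ball x (lam * r), g y ∂μ := by
      rw [mul_left_comm]
      exact mul_le_mul_right ENNReal.mul_div_le _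
    _ ≤ CP.toNNReal * ENNReal.ofReal r * ∫⁻ y in ball x (2 ^ L * r), g y ∂μ := by
      rw [ENNReal.ofReal_mul (zero_le_one.trans hCP), ENNReal.ofReal]
      gcongr

end

section

variable {μ : Measure X} [SFinite μ] [SecondCountableTopology X]

theorem measurableSet_dist_lt (r : ℝ) : MeasurableSet {p : X × X | dist p.2 p.1 < r} :=
  (isOpen_lt (by fun_prop) continuous_const).measurableSet

theorem measurable_setLIntegral_ball {f : X → ℝ≥0∞} (hf : Measurable f) (r : ℝ) :
    Measurable fun x => ∫⁻ y in ball x r, f y ∂μ := by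
  have h := ((hf.comp measurable_snd).indicator (measurableSet_dist_lt r)).lintegral_prod_right'
    (ν := μ)
  convert h using 2 with x
  rw [← lintegral_indicator measurableSet_ball]
  rfl

theorem measurable_measure_ball (r : ℝ) : Measurable fun x : X => μ (ball x r) := by
  simpa using measurable_setLIntegral_ball (μ := μ) (f := fun _ => 1) measurable_const r

theorem lintegral_mul_setLIntegral_ball_comm {f a : X → ℝ≥0∞} (hf : Measurable f)
    (ha : Measurable a) (r : ℝ) :
    ∫⁻ x, a x * ∫⁻ y in ball x r, f y ∂μ ∂μ = ∫⁻ y, f y * ∫⁻ x in ball y r, a x ∂μ ∂μ := by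
  let F : X × X → ℝ≥0∞ := {p | dist p.2 p.1 < r}.indicator fun p => a p.1 * f p.2
  have hF : Measurable F :=
    ((ha.comp measurable_fst).mul (hf.comp measurable_snd)).indicator (measurableSet_dist_lt r)
  have left (x) : a x * ∫⁻ y in ball x r, f y ∂μ = ∫⁻ y, F (x, y) ∂μ := by
    rw [← lintegral_const_mul _ hf, ← lintegral_indicator measurableSet_ball]
    rfl
  have right (y) : f y * ∫⁻ x in ball y r, a x ∂μ = ∫⁻ x, F (x, y) ∂μ := by
    rw [← lintegral_const_mul _ ha, ← lintegral_indicator measurableSet_ball]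
    refine lintegral_congr fun x => ?_
    simp only [F, indicator, mem_ball, mem_ofPred_eq, dist_comm x y, mul_comm]
  simp_rw [left, right]
  exact lintegral_lintegral_swap hF.aemeasurable

end

/-! ### Telescoping over dyadic balls -/

/-- The mean over `S` of the deviation `|u - c|` is at most `a`. -/
def MeanDevLe (μ : Measure X) (u : X → ℝ) (S : Set X) (c a : ℝ) : Prop :=
  ∫⁻ y in S, ENNReal.ofReal |u y - c| ∂μ ≤ ENNReal.ofReal a * μ S

/-- The points at which the mean values of `g` over the balls of radius `2⁻ʲ`, `j ≥ m`, are at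
most `M`: a sublevel set of the dyadic maximal function of `g` restricted to small scales. -/
def maximalSublevel (μ : Measure X) (g : X → ℝ≥0∞) (M : ℝ≥0) (m : ℕ) : Set X :=
  {x | ∀ j ≥ m, ∫⁻ z in ball x ((1 / 2) ^ j), g z ∂μ ≤ M * μ (ball x ((1 / 2) ^ j))}

theorem tendsto_one_half_pow : Tendsto (fun j : ℕ => (1 / 2 : ℝ) ^ j) atTop (𝓝 0) :=
  tendsto_pow_atTop_nhds_zero_of_lt_one (by norm_num) (by norm_num)

theorem two_pow_mul_one_half_pow {L j : ℕ} (h : L ≤ j) :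
    (2 : ℝ) ^ L * (1 / 2) ^ j = (1 / 2) ^ (j - L) := by
  obtain ⟨k, rfl⟩ := Nat.exists_eq_add_of_le h
  rw [Nat.add_sub_cancel_left, pow_add, ← mul_assoc, ← mul_pow]
  norm_num

namespace MeanDevLe

variable {μ : Measure X} {u : X → ℝ} {S T : Set X} {c c' a b : ℝ}

section

omit [MetricSpace X] [BorelSpace X]

theorem abs_sub_le (hS : μ S ≠ 0) (hS' : μ S ≠ ∞) (hu : AEMeasurable u μ) (ha : 0 ≤ a)
    (hb : 0 ≤ b) (hc : MeanDevLe μ u S c a) (hc' : MeanDevLe μ u S c' b) : |c - c'| ≤ a + b := by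
  have h : ENNReal.ofReal |c - c'| * μ S ≤ ENNReal.ofReal (a + b) * μ S :=
    calc ENNReal.ofReal |c - c'| * μ S
      _ = ∫⁻ _ in S, ENNReal.ofReal |c - c'| ∂μ := by simp
      _ ≤ ∫⁻ y in S, (ENNReal.ofReal |u y - c| + ENNReal.ofReal |u y - c'|) ∂μ := by
        refine lintegral_mono fun y => ?_
        rw [abs_sub_comm (u y) c]
        exact ofReal_abs_sub_le c (u y) c'
      _ = (∫⁻ y in S, ENNReal.ofReal |u y - c| ∂μ) + ∫⁻ y in S, ENNReal.ofReal |u y - c'| ∂μ :=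
        lintegral_add_left' (by fun_prop) _
      _ ≤ ENNReal.ofReal (a + b) * μ S := by
        rw [ENNReal.ofReal_add ha hb, add_mul]
        exact add_le_add hc hc'
  rwa [ENNReal.mul_le_mul_iff_left hS hS', ENNReal.ofReal_le_ofReal_iff (by positivity)] at h

theorem mono_set (hST : S ⊆ T) {k : ℝ} (hk : μ T ≤ ENNReal.ofReal k * μ S) (ha : 0 ≤ a)
    (h : MeanDevLe μ u T c a) : MeanDevLe μ u S c (a * k) :=
  calc ∫⁻ y in S, ENNReal.ofReal |u y - c| ∂μ
    _ ≤ ENNReal.ofReal a * μ T := (lintegral_mono_set hST).trans h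
    _ ≤ ENNReal.ofReal a * (ENNReal.ofReal k * μ S) := mul_le_mul_right hk _
    _ = ENNReal.ofReal (a * k) * μ S := by rw [ENNReal.ofReal_mul ha, mul_assoc]

theorem of_forall_mem (hS : MeasurableSet S) (h : ∀ y ∈ S, |u y - c| ≤ a) :
    MeanDevLe μ u S c a := by
  rw [MeanDevLe, ← setLIntegral_const]
  exact setLIntegral_mono' hS fun y hy => ENNReal.ofReal_le_ofReal (h y hy)

end

variable {Cd : ℝ}

theorem tendsto_center (hμ : Doubling μ Cd) (hu : Continuous u) {x : X} {Q : ℝ} (hQ : 0 ≤ Q)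
    {c : ℕ → ℝ}
    (hc : ∀ᶠ j in atTop, MeanDevLe μ u (ball x ((1 / 2) ^ j)) (c j) (Q * (1 / 2) ^ j)) :
    Tendsto c atTop (𝓝 (u x)) := by
  rw [Metric.tendsto_nhds]
  intro ε hε
  obtain ⟨δ, hδ, near⟩ := Metric.continuous_iff.1 hu x (ε / 2) (by positivity)
  have small : Tendsto (fun j : ℕ => Q * (1 / 2 : ℝ) ^ j) atTop (𝓝 0) := by
    simpa using tendsto_one_half_pow.const_mul Q
  filter_upwards [hc, small.eventually_lt_const (half_pos hε),
    tendsto_one_half_pow.eventually_lt_const hδ] with j hcj hQj hjδ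
  have hux : MeanDevLe μ u (ball x ((1 / 2) ^ j)) (u x) (ε / 2) :=
    of_forall_mem measurableSet_ball fun z hz => (near z (hz.trans hjδ)).le
  have := hcj.abs_sub_le (hμ.measure_ball_ne_zero x (by positivity)) (hμ.measure_ball_ne_top x _)
    hu.measurable.aemeasurable (by positivity) (by positivity) hux
  rw [Real.dist_eq]
  linarith

omit [BorelSpace X] in
theorem abs_sub_succ_le (hμ : Doubling μ Cd) (hu : AEMeasurable u μ) {x : X} {Q : ℝ} (hQ : 0 ≤ Q)
    {j : ℕ} (hc : MeanDevLe μ u (ball x ((1 / 2) ^ j)) c (Q * (1 / 2) ^ j))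
    (hc' : MeanDevLe μ u (ball x ((1 / 2) ^ (j + 1))) c' (Q * (1 / 2) ^ (j + 1))) :
    |c - c'| ≤ Q * (Cd + 1) * (1 / 2) ^ j := by
  have halve : (1 / 2 : ℝ) ^ j = 2 * (1 / 2) ^ (j + 1) := by ring
  have hc_small := hc.mono_set (S := ball x ((1 / 2) ^ (j + 1)))
    (ball_subset_ball (pow_le_pow_of_le_one (by norm_num) (by norm_num) j.le_succ))
    (by rw [halve]; exact hμ.measure_ball_two_mul_le x _) (by positivity)
  have hCd := hμ.1
  have := hc_small.abs_sub_le (hμ.measure_ball_ne_zero x (by positivity))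
    (hμ.measure_ball_ne_top x _) hu (by positivity) (by positivity) hc'
  have : 0 ≤ Q * (1 / 2) ^ (j + 1) := by positivity
  rw [halve] at *
  linarith

theorem abs_sub_center_le (hμ : Doubling μ Cd) (hu : Continuous u) {x : X} {Q : ℝ} (hQ : 0 ≤ Q)
    {c : ℕ → ℝ} {n : ℕ}
    (hc : ∀ j ≥ n, MeanDevLe μ u (ball x ((1 / 2) ^ j)) (c j) (Q * (1 / 2) ^ j)) {j : ℕ}
    (hj : n ≤ j) : |c j - u x| ≤ 2 * (Q * (Cd + 1)) * (1 / 2) ^ j := by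
  have step (i : ℕ) :
      dist (c (j + i)) (c (j + (i + 1))) ≤ 2 * (Q * (Cd + 1)) * (1 / 2) ^ j / 2 / 2 ^ i := by
    refine (abs_sub_succ_le hμ hu.measurable.aemeasurable hQ (hc _ (by omega))
      (hc _ (by omega))).trans_eq ?_
    rw [pow_add, one_div_pow 2 i]
    ring
  have limit : Tendsto (fun i => c (j + i)) atTop (𝓝 (u x)) :=
    (tendsto_center hμ hu hQ (eventually_atTop.2 ⟨n, hc⟩)).comp
      (tendsto_atTop_mono (Nat.le_add_left · j) tendsto_id)
  simpa [Real.dist_eq] using dist_le_of_le_geometric_two_of_tendsto₀ step limit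

end MeanDevLe

section

variable {μ : Measure X} {Cd : ℝ} {P M : ℝ≥0} {L m : ℕ} {g : X → ℝ≥0∞} {u : X → ℝ}

omit [BorelSpace X] in
theorem UnitPoincare.exists_meanDevLe (hP : UnitPoincare μ P L) (hμ : Doubling μ Cd)
    (hu : AEMeasurable u μ) (hu01 : ∀ x, u x ∈ Icc 0 1) (hug : IsUpperGradient u g) {x : X}
    (hx : x ∈ maximalSublevel μ g M m) {j : ℕ} (hj : m + L ≤ j) :
    ∃ c, MeanDevLe μ u (ball x ((1 / 2) ^ j)) c (P * M * Cd ^ L * (1 / 2) ^ j) := by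
  obtain ⟨c, hc⟩ := hP x ((1 / 2) ^ j) (by positivity) u g hu hu01 hug
  have hCd : 0 ≤ Cd := zero_le_one.trans hμ.1
  refine ⟨c, hc.trans ?_⟩
  calc P * ENNReal.ofReal ((1 / 2) ^ j) * ∫⁻ y in ball x (2 ^ L * (1 / 2) ^ j), g y ∂μ
    _ ≤ P * ENNReal.ofReal ((1 / 2) ^ j) * (M * μ (ball x (2 ^ L * (1 / 2) ^ j))) := by
      rw [two_pow_mul_one_half_pow (by omega)]
      exact mul_le_mul_right (hx (j - L) (by omega)) _
    _ ≤ P * ENNReal.ofReal ((1 / 2) ^ j) *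
          (M * (ENNReal.ofReal Cd ^ L * μ (ball x ((1 / 2) ^ j)))) := by
      gcongr
      exact hμ.measure_ball_two_pow_mul_le L x _
    _ = ENNReal.ofReal (P * M * Cd ^ L * (1 / 2) ^ j) * μ (ball x ((1 / 2) ^ j)) := by
      rw [ENNReal.ofReal_mul (by positivity), ENNReal.ofReal_mul (by positivity),
        ENNReal.ofReal_mul (by positivity), ENNReal.ofReal_pow hCd, ENNReal.ofReal_coe_nnreal,
        ENNReal.ofReal_coe_nnreal]
      ring

-- Telescoping from the balls around `x` and `y` up to the first scale at which they overlap.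
theorem UnitPoincare.exists_abs_sub_le (hP : UnitPoincare μ P L) (hμ : Doubling μ Cd)
    (M : ℝ≥0) (m : ℕ) : ∃ K : ℝ, ∀ (u : X → ℝ) (g : X → ℝ≥0∞), Continuous u →
      (∀ x, u x ∈ Icc 0 1) → IsUpperGradient u g →
      ∀ x ∈ maximalSublevel μ g M m, ∀ y ∈ maximalSublevel μ g M m, ∀ l ≥ m + L + 1,
        dist x y < (1 / 2) ^ l → |u x - u y| ≤ K * (1 / 2) ^ l := by
  set Q : ℝ := P * M * Cd ^ L
  have hCd := hμ.1
  have hQ : 0 ≤ Q := by positivity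
  refine ⟨6 * (Q * (Cd + 1)) + (2 * Q * Cd ^ 2 + Q), ?_⟩
  intro u g hu hu01 hug x hx y hy l hl hxy
  have hum := hu.measurable.aemeasurable (μ := μ)
  choose! cx hcx using fun j => hP.exists_meanDevLe hμ hum hu01 hug hx (j := j)
  choose! cy hcy using fun j => hP.exists_meanDevLe hμ hum hu01 hug hy (j := j)
  obtain ⟨k, rfl⟩ : ∃ k, l = k + 1 := ⟨l - 1, by omega⟩
  have hcx_near := MeanDevLe.abs_sub_center_le hμ hu hQ hcx (show m + L ≤ k by omega)
  have hcy_near := MeanDevLe.abs_sub_center_le hμ hu hQ hcy (show m + L ≤ k + 1 by omega)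
  have hkr : (1 / 2 : ℝ) ^ k = 2 * (1 / 2) ^ (k + 1) := by ring
  have hr : (0 : ℝ) < (1 / 2) ^ (k + 1) := by positivity
  set r : ℝ := (1 / 2) ^ (k + 1)
  have hcx_overlap := (hcx k (by omega)).mono_set (S := ball y r) (k := Cd ^ 2)
    (ball_subset_ball' (by rw [dist_comm, hkr]; linarith))
    (by
      rw [ENNReal.ofReal_pow (by positivity)]
      refine hμ.measure_ball_le_of_dist_add_le 2 ?_
      rw [hkr, dist_comm]
      linarith) (by positivity)
  have hcxy := hcx_overlap.abs_sub_le (hμ.measure_ball_ne_zero y hr) (hμ.measure_ball_ne_top y r)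
    hum (by positivity) (by positivity) (hcy (k + 1) (by omega))
  rw [hkr] at hcx_near hcxy
  calc |u x - u y|
    _ ≤ |u x - cx k| + |cx k - cy (k + 1)| + |cy (k + 1) - u y| :=
      (abs_sub_le _ _ _).trans (by gcongr; exact abs_sub_le _ _ _)
    _ ≤ _ := by
      rw [abs_sub_comm (u x)]
      linarith

end

/-! ### Lebesgue differentiation -/

section

variable {μ : Measure X} {Cd : ℝ}

omit [BorelSpace X] in
theorem Doubling.le_mul_measure_ball_of_div_le (hμ : Doubling μ Cd) {x : X} {r : ℝ} (hr : 0 < r)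
    {a b : ℝ≥0∞} (h : a / μ (closedBall x r) ≤ b) :
    a ≤ b * ENNReal.ofReal Cd * μ (ball x r) := by
  have closedBall_le : μ (closedBall x r) ≤ ENNReal.ofReal Cd * μ (ball x r) :=
    (measure_mono (closedBall_subset_ball (by linarith))).trans (hμ.measure_ball_two_mul_le x r)
  have ne_zero : μ (closedBall x r) ≠ 0 := fun h =>
    hμ.measure_ball_ne_zero x hr (measure_mono_null ball_subset_closedBall h)
  have ne_top : μ (closedBall x r) ≠ ∞ := ne_top_of_le_ne_top
    (ENNReal.mul_ne_top ENNReal.ofReal_ne_top (hμ.measure_ball_ne_top x r)) closedBall_le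
  rw [mul_assoc]
  exact ((ENNReal.div_le_iff ne_zero ne_top).1 h).trans (mul_le_mul_right closedBall_le _)

variable [SecondCountableTopology X]

theorem Doubling.ae_mem_mInterior_of_measurableSet (hμ : Doubling μ Cd) {S : Set X}
    (hS : MeasurableSet S) :
    ∀ᵐ x ∂μ, x ∈ S → x ∈ mInterior μ S := by
  have := hμ.isUnifLocDoublingMeasure
  have := hμ.isLocallyFiniteMeasure
  filter_upwards [(IsUnifLocDoublingMeasure.vitaliFamily μ
    1).ae_tendsto_measure_inter_div_of_measurableSet hS.compl] with x density hxS
  have closedBalls := density.comp (IsUnifLocDoublingMeasure.tendsto_closedBall_filterAt μ (K := 1)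
    (x := x) (fun _ => x) id tendsto_id
    (eventually_nhdsWithin_of_forall fun r (hr : 0 < r) => by simp [hr.le]))
  rw [indicator_of_notMem (notMem_compl_iff.2 hxS)] at closedBalls
  have upper := ENNReal.Tendsto.mul_const (b := ENNReal.ofReal Cd) closedBalls
    (.inr ENNReal.ofReal_ne_top)
  rw [zero_mul] at upper
  refine tendsto_of_tendsto_of_tendsto_of_le_of_le' tendsto_const_nhds upper
    (Eventually.of_forall fun _ => zero_le)
    (eventually_nhdsWithin_of_forall fun r (hr : 0 < r) => ENNReal.div_le_of_le_mul ?_)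
  refine le_trans (measure_mono fun y hy => ?_) (hμ.le_mul_measure_ball_of_div_le hr le_rfl)
  exact ⟨hy.2, ball_subset_closedBall hy.1⟩

omit [BorelSpace X] [SecondCountableTopology X] in
theorem mInterior_mono {S T : Set X} (h : S ⊆ T) : mInterior μ S ⊆ mInterior μ T := fun _ hx =>
  tendsto_of_tendsto_of_tendsto_of_le_of_le tendsto_const_nhds hx (fun _ => zero_le)
    fun _ => by gcongr

theorem Doubling.ae_mem_mInterior (hμ : Doubling μ Cd) {S : Set X} (hS : NullMeasurableSet S μ) :
    ∀ᵐ x ∂μ, x ∈ S → x ∈ mInterior μ S := by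
  obtain ⟨T, hTS, hT, hae⟩ := hS.exists_measurable_subset_ae_eq
  filter_upwards [hμ.ae_mem_mInterior_of_measurableSet hT, hae.mem_iff] with x hx hiff hxS
  exact mInterior_mono hTS (hx (hiff.2 hxS))

omit [BorelSpace X] [SecondCountableTopology X] in
theorem Doubling.eventually_mul_measure_diff_lt (hμ : Doubling μ Cd) {E : Set X} {x : X}
    (hx : x ∈ mInterior μ E) {k : ℝ≥0∞} (hk : k ≠ ∞) :
    ∀ᶠ r in 𝓝[>] (0 : ℝ), k * μ (ball x r \ E) < μ (ball x r) := by
  obtain ⟨ε, hε, hkε⟩ := ENNReal.exists_nnreal_pos_mul_lt hk one_ne_zero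
  filter_upwards [hx.eventually_lt_const (ENNReal.coe_pos.2 hε), self_mem_nhdsWithin]
    with r density hr
  have ball_ne_zero := hμ.measure_ball_ne_zero x hr
  have ball_ne_top := hμ.measure_ball_ne_top x r
  calc k * μ (ball x r \ E) ≤ k * (ε * μ (ball x r)) := by
        gcongr
        exact (ENNReal.div_le_iff_le_mul (.inl ball_ne_zero) (.inl ball_ne_top)).1 density.le
    _ = ε * k * μ (ball x r) := by ring
    _ < 1 * μ (ball x r) := by gcongr
    _ = μ (ball x r) := one_mul _

theorem Doubling.ae_exists_mem_maximalSublevel (hμ : Doubling μ Cd) {f : X → ℝ≥0∞}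
    (hf : Measurable f) (hfi : ∫⁻ x, f x ∂μ ≠ ∞) :
    ∀ᵐ x ∂μ, ∃ m : ℕ, x ∈ maximalSublevel μ f m m := by
  have := hμ.isUnifLocDoublingMeasure
  have := hμ.isLocallyFiniteMeasure
  filter_upwards [(IsUnifLocDoublingMeasure.vitaliFamily μ 1).ae_tendsto_lintegral_div' hf hfi,
    ae_lt_top hf hfi] with x differentiation hfx
  have dyadic : Tendsto (fun j : ℕ => (1 / 2 : ℝ) ^ j) atTop (𝓝[>] 0) :=
    tendsto_nhdsWithin_iff.2 ⟨tendsto_one_half_pow, Eventually.of_forall fun j =>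
      mem_Ioi.2 (by positivity)⟩
  have closedBalls := differentiation.comp (IsUnifLocDoublingMeasure.tendsto_closedBall_filterAt μ
    (K := 1) (x := x) (fun _ => x) _ dyadic (Eventually.of_forall fun j => by simp))
  obtain ⟨M, hfM, hM⟩ := ENNReal.lt_iff_exists_nnreal_btwn.1 hfx
  obtain ⟨j₀, hj₀⟩ := eventually_atTop.1 (closedBalls.eventually_lt_const hfM)
  obtain ⟨n, hn⟩ := ENNReal.exists_nat_gt
    (ENNReal.mul_ne_top hM.ne (ENNReal.ofReal_ne_top (r := Cd)))
  refine ⟨max j₀ n, fun j hj => ?_⟩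
  calc ∫⁻ z in ball x ((1 / 2) ^ j), f z ∂μ
    _ ≤ ∫⁻ z in closedBall x ((1 / 2) ^ j), f z ∂μ := lintegral_mono_set ball_subset_closedBall
    _ ≤ M * ENNReal.ofReal Cd * μ (ball x ((1 / 2) ^ j)) :=
      hμ.le_mul_measure_ball_of_div_le (by positivity) (hj₀ j (le_of_max_le_left hj)).le
    _ ≤ _ := by
      gcongr
      exact hn.le.trans (by simp)

theorem measurableSet_maximalSublevel [SFinite μ] {f : X → ℝ≥0∞} (hf : Measurable f) (M : ℝ≥0)
    (m : ℕ) : MeasurableSet (maximalSublevel μ f M m) := by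
  simp only [maximalSublevel, ofPred_forall]
  exact MeasurableSet.iInter fun j => MeasurableSet.iInter fun _ =>
    measurableSet_le (measurable_setLIntegral_ball hf _) ((measurable_measure_ball _).const_mul _)

theorem Doubling.aemeasurable_of_continuousOn_maximalSublevel (hμ : Doubling μ Cd)
    {f : X → ℝ≥0∞} (hf : Measurable f) (hfi : ∫⁻ x, f x ∂μ ≠ ∞) {w : X → ℝ}
    (hw : ∀ m : ℕ, ContinuousOn w (maximalSublevel μ f m m)) : AEMeasurable w μ := by
  have := hμ.isLocallyFiniteMeasure
  have exhaust : μ.restrict (⋃ m : ℕ, maximalSublevel μ f m m) = μ := by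
    rw [Measure.restrict_eq_self_of_ae_mem]
    filter_upwards [hμ.ae_exists_mem_maximalSublevel hf hfi] with x hx using mem_iUnion.2 hx
  rw [← exhaust, aemeasurable_iUnion_iff]
  exact fun m => (hw m).aemeasurable (measurableSet_maximalSublevel hf _ _)

end

/-! ### Curves as limits of coarse curves -/

/-- A discontinuous substitute for a curve from `x` to `y`: a map that is `1`-Lipschitz up to an
additive error `η`. Unlike curves, coarse curves of finite length join any two points of an
`η`-chain. -/
structure CoarseCurve (η : ℝ) (x y : X) where
  len : ℝ
  len_nonneg : 0 ≤ len
  toFun : ℝ → X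
  measurable_toFun : Measurable toFun
  dist_le : ∀ s t, dist (toFun s) (toFun t) ≤ dist s t + η
  map_zero : toFun 0 = x
  map_of_len_le : ∀ t, len ≤ t → toFun t = y

namespace CoarseCurve

omit [BorelSpace X]

variable {η : ℝ} {x y z : X} {κ : X → ℝ≥0∞}

/-- The integral of the weight `κ` along a coarse curve. -/
def cost (p : CoarseCurve η x y) (κ : X → ℝ≥0∞) : ℝ≥0∞ :=
  ∫⁻ t in Ico 0 p.len, κ (p.toFun t)

/-- The coarse curve of length zero. -/
def refl (hη : 0 ≤ η) (x : X) : CoarseCurve η x x where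
  len := 0
  len_nonneg := le_rfl
  toFun _ := x
  measurable_toFun := measurable_const
  dist_le s t := by rw [dist_self]; positivity
  map_zero := rfl
  map_of_len_le _ _ := rfl

theorem cost_refl (hη : 0 ≤ η) (x : X) (κ : X → ℝ≥0∞) : (refl hη x).cost κ = 0 := by
  simp [cost, refl]

theorem dist_map_le (p : CoarseCurve η x y) (hyz : dist y z ≤ η) {s t : ℝ}
    (ht : p.len + dist y z ≤ t) : dist (p.toFun s) z ≤ dist s t + η := by
  rcases le_or_gt p.len s with hs | hs
  · rw [p.map_of_len_le s hs]
    linarith [dist_nonneg (x := s) (y := t)]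
  · have := p.dist_le s p.len
    rw [p.map_of_len_le _ le_rfl] at this
    have : dist s p.len + dist y z ≤ dist s t := by
      rw [Real.dist_eq, Real.dist_eq, abs_of_neg (by linarith),
        abs_of_neg (by linarith [dist_nonneg (x := y) (y := z)])]
      linarith
    linarith [dist_triangle (p.toFun s) y z]

/-- Waiting at the endpoint `y` for the time `dist y z` and then jumping to `z`. -/
def extend (p : CoarseCurve η x y) (hyz : dist y z ≤ η) : CoarseCurve η x z where
  len := p.len + dist y z
  len_nonneg := add_nonneg p.len_nonneg dist_nonneg
  toFun t := if t < p.len + dist y z then p.toFun t else z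
  measurable_toFun := Measurable.ite measurableSet_Iio p.measurable_toFun measurable_const
  dist_le s t := by
    split_ifs with hs ht ht
    · exact p.dist_le s t
    · exact p.dist_map_le hyz (not_lt.1 ht)
    · rw [dist_comm, dist_comm s]
      exact p.dist_map_le hyz (not_lt.1 hs)
    · rw [dist_self]
      linarith [dist_nonneg (x := s) (y := t), dist_nonneg (x := y) (y := z)]
  map_zero := by
    split_ifs with h
    · exact p.map_zero
    · have hlen := p.len_nonneg
      have hdist := dist_nonneg (x := y) (y := z)
      rw [← p.map_zero, p.map_of_len_le 0 (by linarith)]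
      exact (dist_le_zero.1 (by linarith)).symm
  map_of_len_le _ ht := if_neg (not_lt.2 ht)

theorem cost_extend_le (p : CoarseCurve η x y) (hyz : dist y z ≤ η) (κ : X → ℝ≥0∞) :
    (p.extend hyz).cost κ ≤ p.cost κ + κ y * edist y z := by
  have split : Ico 0 (p.len + dist y z) = Ico 0 p.len ∪ Ico p.len (p.len + dist y z) :=
    (Ico_union_Ico_eq_Ico p.len_nonneg (le_add_of_nonneg_right dist_nonneg)).symm
  simp only [cost, extend, split]
  refine (lintegral_union_le _ _ _).trans (add_le_add ?_ ?_)
  · refine (setLIntegral_congr_fun measurableSet_Ico fun t ht => ?_).le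
    simp only [if_pos (ht.2.trans_le (le_add_of_nonneg_right dist_nonneg))]
  · rw [setLIntegral_congr_fun (g := fun _ => κ y) measurableSet_Ico fun t ht => ?_]
    · rw [setLIntegral_const, Real.volume_Ico, add_sub_cancel_left, edist_dist]
    · simp only [if_pos ht.2, p.map_of_len_le t ht.1]

theorem ofReal_len_le_cost (p : CoarseCurve η x y) (hκ : ∀ z, 1 ≤ κ z) :
    ENNReal.ofReal p.len ≤ p.cost κ :=
  calc ENNReal.ofReal p.len = ∫⁻ _ in Ico 0 p.len, 1 := by simp
    _ ≤ p.cost κ := lintegral_mono fun _ => hκ _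

end CoarseCurve

theorem exists_subseq_tendsto_of_dist_le {X Y : Type*} [MetricSpace X] [ProperSpace X]
    [PseudoMetricSpace Y] [TopologicalSpace.SeparableSpace Y] {f : ℕ → Y → X} {η : ℕ → ℝ}
    (hη : Tendsto η atTop (𝓝 0)) (hf : ∀ i s t, dist (f i s) (f i t) ≤ dist s t + η i)
    {a : Y} {x : X} (hx : ∀ i, f i a = x) :
    ∃ g : Y → X, LipschitzWith 1 g ∧ ∃ φ : ℕ → ℕ, StrictMono φ ∧
      ∀ t, Tendsto (fun i => f (φ i) t) atTop (𝓝 (g t)) := by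
  have : Nonempty Y := ⟨a⟩
  obtain ⟨B, hB⟩ := hη.bddAbove_range
  obtain ⟨b, -, φ, hφ, hlim⟩ := (isCompact_univ_pi fun n : ℕ =>
    isCompact_closedBall x (dist (TopologicalSpace.denseSeq Y n) a + B)).tendsto_subseq
      (x := fun i n => f i (TopologicalSpace.denseSeq Y n)) fun i n _ => by
        rw [mem_closedBall, ← hx i]
        linarith [hf i (TopologicalSpace.denseSeq Y n) a, hB (mem_range_self i)]
  have hηφ : Tendsto (fun i => η (φ i)) atTop (𝓝 0) := hη.comp hφ.tendsto_atTop
  have hcauchy (t : Y) : CauchySeq fun i => f (φ i) t := by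
    refine Metric.cauchySeq_iff.2 fun ε hε => ?_
    obtain ⟨n, hn⟩ := (TopologicalSpace.denseRange_denseSeq Y).exists_dist_lt t
      (show 0 < ε / 8 by positivity)
    obtain ⟨N, hN⟩ := Metric.cauchySeq_iff.1 (tendsto_pi_nhds.1 hlim n).cauchySeq (ε / 4)
      (by positivity)
    obtain ⟨N', hN'⟩ := eventually_atTop.1 (hηφ.eventually_lt_const (show 0 < ε / 8 by positivity))
    refine ⟨max N N', fun i hi k hk => ?_⟩
    have approx_left := hf (φ i) t (TopologicalSpace.denseSeq Y n)
    have approx_right := hf (φ k) (TopologicalSpace.denseSeq Y n) t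
    have middle := hN i (le_of_max_le_left hi) k (le_of_max_le_left hk)
    rw [dist_comm _ t] at approx_right
    simp only [Function.comp_apply] at middle
    linarith [dist_triangle4 (f (φ i) t) (f (φ i) (TopologicalSpace.denseSeq Y n))
      (f (φ k) (TopologicalSpace.denseSeq Y n)) (f (φ k) t),
      hN' i (le_of_max_le_right hi), hN' k (le_of_max_le_right hk)]
  choose g hg using fun t => cauchySeq_tendsto_of_complete (hcauchy t)
  refine ⟨g, LipschitzWith.of_dist_le_mul fun s t => ?_, φ, hφ, hg⟩
  have error := hηφ.const_add (dist s t)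
  simpa using le_of_tendsto_of_tendsto' ((hg s).dist (hg t)) error fun i => hf _ _ _

namespace CoarseCurve

variable {η : ℕ → ℝ} {x y : X}

omit [BorelSpace X] in
theorem exists_subseq_tendsto_curve [ProperSpace X] (hη : Tendsto η atTop (𝓝 0))
    (p : ∀ i, CoarseCurve (η i) x y) {c : ℝ} (hc : ∀ i, (p i).len ≤ c) :
    ∃ γ : Curve X, γ.toFun 0 = x ∧ γ.toFun γ.len = y ∧ Continuous γ.toFun ∧
      ∃ φ : ℕ → ℕ, StrictMono φ ∧ Tendsto (fun i => (p (φ i)).len) atTop (𝓝 γ.len) ∧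
        ∀ t, Tendsto (fun i => (p (φ i)).toFun t) atTop (𝓝 (γ.toFun t)) := by
  obtain ⟨l, -, φ, hφ, hlen⟩ := isCompact_Icc.tendsto_subseq (x := fun i => (p i).len)
    fun i => ⟨(p i).len_nonneg, hc i⟩
  obtain ⟨g, hg, χ, hχ, hlim⟩ := exists_subseq_tendsto_of_dist_le (hη.comp hφ.tendsto_atTop)
    (fun i => (p (φ i)).dist_le) fun i => (p (φ i)).map_zero
  have hlen' := hlen.comp hχ.tendsto_atTop
  have hη' := (hη.comp hφ.tendsto_atTop).comp hχ.tendsto_atTop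
  refine ⟨⟨l, ge_of_tendsto' hlen fun i => (p _).len_nonneg, g, hg.lipschitzOnWith⟩, ?_, ?_,
    hg.continuous, φ ∘ χ, hφ.comp hχ, hlen', hlim⟩
  · exact tendsto_nhds_unique (hlim 0)
      (tendsto_const_nhds.congr fun i => (p (φ (χ i))).map_zero.symm)
  · have error := ((tendsto_const_nhds (x := l)).dist hlen').add hη'
    have := le_of_tendsto_of_tendsto' ((hlim l).dist (tendsto_const_nhds (x := y))) error
      fun i => by
        simpa only [(p (φ (χ i))).map_of_len_le _ le_rfl, Function.comp_apply] using
          (p (φ (χ i))).dist_le l (p (φ (χ i))).len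
    rw [dist_self, add_zero] at this
    exact dist_le_zero.1 this

theorem integral_le_of_tendsto {p : ∀ i, CoarseCurve (η i) x y} {γ : Curve X}
    (hlen : Tendsto (fun i => (p i).len) atTop (𝓝 γ.len))
    (hp : ∀ t, Tendsto (fun i => (p i).toFun t) atTop (𝓝 (γ.toFun t))) {κ : X → ℝ≥0∞}
    (hκ : Continuous κ) {c : ℝ≥0∞} (hc : ∀ᶠ i in atTop, (p i).cost κ ≤ c) :
    γ.integral κ ≤ c := by
  set F : ℕ → ℝ → ℝ≥0∞ := fun i => (Ico 0 (p i).len).indicator fun t => κ ((p i).toFun t)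
  have hF (i : ℕ) : Measurable (F i) :=
    (hκ.measurable.comp (p i).measurable_toFun).indicator measurableSet_Ico
  calc γ.integral κ = ∫⁻ t in Ioo 0 γ.len, κ (γ.toFun t) := by
        rw [Curve.integral, restrict_Ioo_eq_restrict_Icc]
    _ ≤ ∫⁻ t in Ioo 0 γ.len, liminf (fun i => F i t) atTop := by
        refine setLIntegral_mono' measurableSet_Ioo fun t ht => ?_
        rw [← ((hκ.tendsto _).comp (hp t)).liminf_eq]
        refine liminf_le_liminf ?_
        filter_upwards [hlen.eventually_const_lt ht.2] with i hi
        have ht' : t ∈ Ico 0 (p i).len := ⟨ht.1.le, hi⟩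
        simp only [F, indicator_of_mem ht', Function.comp_apply, le_refl]
    _ ≤ ∫⁻ t, liminf (fun i => F i t) atTop := setLIntegral_le_lintegral _ _
    _ ≤ liminf (fun i => ∫⁻ t, F i t) atTop := lintegral_liminf_le hF
    _ ≤ c := by
        refine liminf_le_of_frequently_le' (Eventually.frequently ?_)
        filter_upwards [hc] with i hi
        rwa [lintegral_indicator measurableSet_Ico]

theorem exists_curve_integral_le [ProperSpace X] (hη : Tendsto η atTop (𝓝 0))
    {κ : ℕ → X → ℝ≥0∞} (hκ : ∀ i, Continuous (κ i)) (hmono : Monotone κ)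
    (hone : ∀ i z, 1 ≤ κ i z) {c : ℝ≥0∞} (hc : c ≠ ∞) (p : ∀ i, CoarseCurve (η i) x y)
    (hp : ∀ i, (p i).cost (κ i) ≤ c) :
    ∃ γ : Curve X, γ.toFun 0 = x ∧ γ.toFun γ.len = y ∧ γ.integral (fun z => ⨆ i, κ i z) ≤ c := by
  obtain ⟨γ, h0, h1, hγ, φ, hφ, hlen, hlim⟩ := exists_subseq_tendsto_curve hη p (c := c.toReal)
    fun i => (ENNReal.ofReal_le_iff_le_toReal hc).1
      (((p i).ofReal_len_le_cost (hone i)).trans (hp i))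
  refine ⟨γ, h0, h1, ?_⟩
  rw [Curve.integral, lintegral_iSup (f := fun j t => κ j (γ.toFun t))
    (fun j => ((hκ j).comp hγ).measurable) fun i j hij t => hmono hij _]
  refine iSup_le fun j => integral_le_of_tendsto hlen hlim (hκ j) ?_
  filter_upwards [eventually_ge_atTop j] with i hi
  exact (lintegral_mono fun t => hmono (hi.trans hφ.le_apply) _).trans (hp (φ i))

end CoarseCurve

/-! ### Chain distances -/

/-- The least cost of a coarse curve from `x` to `z`, truncated at `1`. -/
def chainEDist (κ : X → ℝ≥0∞) (η : ℝ) (x z : X) : ℝ≥0∞ :=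
  min 1 (⨅ p : CoarseCurve η x z, p.cost κ)

section

variable {κ : X → ℝ≥0∞} {η : ℝ} {x z z' : X}

section

omit [BorelSpace X]

theorem chainEDist_le_one : chainEDist κ η x z ≤ 1 :=
  min_le_left _ _

theorem chainEDist_ne_top : chainEDist κ η x z ≠ ∞ :=
  (chainEDist_le_one.trans_lt ENNReal.one_lt_top).ne

theorem chainEDist_self (hη : 0 ≤ η) : chainEDist κ η x x = 0 :=
  nonpos_iff_eq_zero.1 <| (min_le_right _ _).trans <|
    (iInf_le _ (CoarseCurve.refl hη x)).trans_eq (CoarseCurve.cost_refl hη x κ)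

theorem chainEDist_le_add (h : dist z z' ≤ η) :
    chainEDist κ η x z' ≤ chainEDist κ η x z + κ z * edist z z' := by
  rw [chainEDist, chainEDist, ← min_add_add_right, ENNReal.iInf_add]
  exact le_min (min_le_of_left_le le_self_add)
    (le_iInf fun p => min_le_of_right_le ((iInf_le _ (p.extend h)).trans (p.cost_extend_le h κ)))

theorem exists_cost_lt_of_chainEDist_lt {c : ℝ≥0∞} (h : chainEDist κ η x z < c) (hc : c ≤ 1) :
    ∃ p : CoarseCurve η x z, p.cost κ < c :=
  iInf_lt_iff.1 ((min_lt_iff.1 h).resolve_left hc.not_gt)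

theorem continuous_chainEDist (hη : 0 < η) {B : ℝ≥0} (hκ : ∀ z, κ z ≤ B) :
    Continuous (chainEDist κ η x) := by
  refine continuous_of_le_add_edist (B + (ENNReal.ofReal η)⁻¹)
    (ENNReal.add_ne_top.2 ⟨ENNReal.coe_ne_top, by simpa using hη⟩) fun z z' => ?_
  rw [edist_comm]
  rcases le_or_gt (dist z' z) η with h | h
  · refine (chainEDist_le_add h).trans ?_
    gcongr
    exact (hκ z').trans le_self_add
  · calc chainEDist κ η x z ≤ (ENNReal.ofReal η)⁻¹ * ENNReal.ofReal η := by
          rw [ENNReal.inv_mul_cancel (by simpa using hη) ENNReal.ofReal_ne_top]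
          exact chainEDist_le_one
      _ ≤ (B + (ENNReal.ofReal η)⁻¹) * edist z' z := by
          rw [edist_dist]
          gcongr
          exact le_add_self
      _ ≤ _ := le_add_self

end

theorem ofReal_abs_toReal_sub_toReal_le {a b c : ℝ≥0∞} (ha : a ≠ ∞) (hb : b ≠ ∞)
    (hab : a ≤ b + c) (hba : b ≤ a + c) : ENNReal.ofReal |a.toReal - b.toReal| ≤ c := by
  rcases abs_choice (a.toReal - b.toReal) with h | h <;> rw [h]
  · rw [ENNReal.ofReal_sub _ ENNReal.toReal_nonneg, ENNReal.ofReal_toReal ha,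
      ENNReal.ofReal_toReal hb]
    exact tsub_le_iff_left.2 hab
  · rw [neg_sub, ENNReal.ofReal_sub _ ENNReal.toReal_nonneg, ENNReal.ofReal_toReal ha,
      ENNReal.ofReal_toReal hb]
    exact tsub_le_iff_left.2 hba

omit [BorelSpace X] in
theorem isUpperGradient_chainEDist (hη : 0 < η) (hκ : Measurable κ)
    (hslow : ∀ z z', dist z z' ≤ η → κ z' ≤ κ z + 1) :
    IsUpperGradient (fun z => (chainEDist κ η x z).toReal) (fun z => κ z + 1) := by
  refine IsUpperGradient.of_local_slope (hκ.add_const 1) hη fun z z' h => ?_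
  rw [← edist_dist]
  refine ofReal_abs_toReal_sub_toReal_le chainEDist_ne_top chainEDist_ne_top ?_ ?_
  · rw [edist_comm]
    refine (chainEDist_le_add (by rwa [dist_comm])).trans ?_
    gcongr
    exact hslow z z' h
  · refine (chainEDist_le_add h).trans ?_
    gcongr
    exact le_self_add

end

/-! ### Measurability of functions with integrable upper gradients -/

/-- The `i`-Lipschitz inf-convolution of `min ρ i`; for lower semicontinuous `ρ` it increases
to `ρ` as `i → ∞`. -/
def lipApprox (ρ : X → ℝ≥0∞) (i : ℕ) (z : X) : ℝ≥0∞ :=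
  ⨅ y, (min (ρ y) i + i * edist y z)

section

omit [MeasurableSpace X] [BorelSpace X]

theorem lipApprox_le_min (ρ : X → ℝ≥0∞) (i : ℕ) (z : X) : lipApprox ρ i z ≤ min (ρ z) i :=
  (iInf_le _ z).trans_eq (by simp)

theorem lipApprox_le_add (ρ : X → ℝ≥0∞) (i : ℕ) (z z' : X) :
    lipApprox ρ i z ≤ lipApprox ρ i z' + i * edist z z' := by
  simp only [lipApprox, ENNReal.iInf_add]
  refine iInf_mono fun y => ?_
  rw [add_assoc, ← mul_add]
  gcongr
  rw [edist_comm z z']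
  exact edist_triangle _ _ _

theorem continuous_lipApprox (ρ : X → ℝ≥0∞) (i : ℕ) : Continuous (lipApprox ρ i) :=
  continuous_of_le_add_edist i (ENNReal.natCast_ne_top i) (lipApprox_le_add ρ i)

theorem monotone_lipApprox (ρ : X → ℝ≥0∞) : Monotone (lipApprox ρ) := by
  intro i j hij z
  have : (i : ℝ≥0∞) ≤ j := by exact_mod_cast hij
  exact iInf_mono fun y => by gcongr

theorem le_iSup_lipApprox {ρ : X → ℝ≥0∞} (hρ : LowerSemicontinuous ρ) (z : X) :
    ρ z ≤ ⨆ i, lipApprox ρ i z := by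
  refine le_of_forall_lt fun t ht => ?_
  obtain ⟨s, hts, hs⟩ := ENNReal.lt_iff_exists_nnreal_btwn.1 ht
  obtain ⟨δ, hδ, hρδ⟩ := EMetric.mem_nhds_iff.1 (hρ z s hs)
  obtain ⟨i, hi⟩ := ENNReal.exists_nat_gt
    (max_lt ENNReal.coe_lt_top (ENNReal.div_lt_top ENNReal.coe_ne_top hδ.ne') :
      max (s : ℝ≥0∞) (s / δ) < ∞).ne
  have hsi : (s : ℝ≥0∞) ≤ i := (le_max_left _ _).trans hi.le
  have hsδ : (s : ℝ≥0∞) ≤ i * δ := (ENNReal.div_le_iff_le_mul (.inl hδ.ne')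
    (.inr (zero_le.trans_lt hi).ne')).1 ((le_max_right _ _).trans hi.le)
  refine hts.trans_le (le_iSup_of_le i (le_iInf fun y => ?_))
  rcases lt_or_ge (edist y z) δ with hy | hy
  · exact (le_min (hρδ hy).le hsi).trans le_self_add
  · exact (hsδ.trans (by gcongr)).trans le_add_self

end

section

variable {μ : Measure X} {Cd : ℝ} {P : ℝ≥0} {L : ℕ}

omit [BorelSpace X] in
theorem maximalSublevel_subset_add {f : X → ℝ≥0∞} (hf : Measurable f) (M c : ℝ≥0) (m : ℕ) :
    maximalSublevel μ f M m ⊆ maximalSublevel μ (fun z => f z + c) (M + c) m := by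
  intro x hx j hj
  rw [lintegral_add_left hf, setLIntegral_const, ENNReal.coe_add, add_mul]
  gcongr
  exact hx j hj

theorem isUpperGradient_chainEDist_lipApprox {ρ : X → ℝ≥0∞} (hρ : Measurable ρ) (i : ℕ) (x : X) :
    IsUpperGradient
      (fun z => (chainEDist (fun z => 1 + lipApprox ρ i z) (1 / ((i : ℝ) + 1)) x z).toReal)
      (fun z => ρ z + (2 : ℝ≥0)) := by
  have slow (z z' : X) (h : dist z z' ≤ 1 / ((i : ℝ) + 1)) :
      1 + lipApprox ρ i z' ≤ 1 + lipApprox ρ i z + 1 := by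
    rw [add_assoc]
    gcongr
    refine (lipApprox_le_add ρ i z' z).trans ?_
    gcongr
    rw [edist_comm, edist_dist, ← ENNReal.ofReal_natCast, ← ENNReal.ofReal_mul (by positivity),
      ENNReal.ofReal_le_one]
    rw [le_div_iff₀ (by positivity)] at h
    linarith [dist_nonneg (x := z) (y := z')]
  refine (isUpperGradient_chainEDist (by positivity)
    ((continuous_lipApprox ρ i).measurable.const_add 1) slow).mono (hρ.add_const _) fun z => ?_
  dsimp only
  rw [add_right_comm, add_comm, one_add_one_eq_two, ENNReal.coe_ofNat]
  gcongr
  exact (lipApprox_le_min ρ i z).trans (min_le_left _ _)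

theorem UnitPoincare.exists_chainEDist_le (hP : UnitPoincare μ P L) (hμ : Doubling μ Cd)
    {ρ : X → ℝ≥0∞} (hρ : Measurable ρ) (M : ℝ≥0) (m : ℕ) :
    ∃ K : ℝ, ∀ x ∈ maximalSublevel μ ρ M m, ∀ y ∈ maximalSublevel μ ρ M m, ∀ l ≥ m + L + 1,
      dist x y < (1 / 2) ^ l → ∀ i : ℕ,
        (chainEDist (fun z => 1 + lipApprox ρ i z) (1 / ((i : ℝ) + 1)) x y).toReal ≤
          K * (1 / 2) ^ l := by
  obtain ⟨K, hK⟩ := hP.exists_abs_sub_le hμ (M + 2) m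
  refine ⟨K, fun x hx y hy l hl hxy i => ?_⟩
  have bounded (z : X) : 1 + lipApprox ρ i z ≤ (1 + i : ℝ≥0) := by
    push_cast
    gcongr
    exact (lipApprox_le_min ρ i z).trans (min_le_right _ _)
  have h := hK (fun z => (chainEDist _ _ x z).toReal) _ (ENNReal.continuousOn_toReal.comp_continuous
      (continuous_chainEDist (by positivity) bounded) fun z => chainEDist_ne_top)
    (fun z => ⟨ENNReal.toReal_nonneg, ENNReal.toReal_mono ENNReal.one_ne_top chainEDist_le_one⟩)
    (isUpperGradient_chainEDist_lipApprox hρ i x)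
    x (maximalSublevel_subset_add hρ M 2 m hx) y (maximalSublevel_subset_add hρ M 2 m hy) l hl hxy
  rw [chainEDist_self (by positivity), ENNReal.toReal_zero, zero_sub, abs_neg] at h
  exact (le_abs_self _).trans h

theorem IsUpperGradient.abs_sub_le_of_chainEDist_le [ProperSpace X] {ρ : X → ℝ≥0∞}
    (hρ : LowerSemicontinuous ρ) {w : X → ℝ} (hw : ∀ x, w x ∈ Icc 0 1) (hwρ : IsUpperGradient w ρ)
    {x y : X} {b : ℝ} (hb : ∀ i : ℕ,
      (chainEDist (fun z => 1 + lipApprox ρ i z) (1 / ((i : ℝ) + 1)) x y).toReal ≤ b) :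
    |w x - w y| ≤ b := by
  refine le_of_forall_gt_imp_ge_of_dense fun c hc => ?_
  have hc0 : 0 ≤ c := (ENNReal.toReal_nonneg.trans (hb 0)).trans hc.le
  rcases le_or_gt c 1 with hc1 | hc1
  · choose p hp using fun i => exists_cost_lt_of_chainEDist_lt
      ((ENNReal.lt_ofReal_iff_toReal_lt chainEDist_ne_top).2 ((hb i).trans_lt hc))
      (ENNReal.ofReal_le_one.2 hc1)
    obtain ⟨γ, h0, h1, hγ⟩ := CoarseCurve.exists_curve_integral_le
      (κ := fun i z => 1 + lipApprox ρ i z) tendsto_one_div_add_atTop_nhds_zero_nat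
      (fun i => continuous_const.add (continuous_lipApprox ρ i))
      (fun i j hij z => add_le_add_right (monotone_lipApprox ρ hij z) 1)
      (fun i z => le_self_add) ENNReal.ofReal_ne_top p fun i => (hp i).le
    have ugIneq := hwρ.2 γ
    rw [UGIneq, h0, h1] at ugIneq
    refine (ENNReal.ofReal_le_ofReal_iff hc0).1 (ugIneq.trans (le_trans ?_ hγ))
    exact lintegral_mono fun t =>
      (le_iSup_lipApprox hρ _).trans (iSup_mono fun i => le_add_self)
  · rw [abs_le]
    constructor <;> linarith [(hw x).1, (hw x).2, (hw y).1, (hw y).2]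

theorem IsUpperGradient.aemeasurable [ProperSpace X] (hP : UnitPoincare μ P L)
    (hμ : Doubling μ Cd) {ρ : X → ℝ≥0∞} (hρ : LowerSemicontinuous ρ) (hρi : ∫⁻ x, ρ x ∂μ ≠ ∞)
    {w : X → ℝ} (hw : ∀ x, w x ∈ Icc 0 1) (hwρ : IsUpperGradient w ρ) : AEMeasurable w μ := by
  refine hμ.aemeasurable_of_continuousOn_maximalSublevel hρ.measurable hρi fun m => ?_
  obtain ⟨K, hK⟩ := hP.exists_chainEDist_le hμ hρ.measurable m m
  refine Metric.continuousOn_iff.2 fun x hx ε hε => ?_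
  have small : Tendsto (fun l : ℕ => K * (1 / 2) ^ l) atTop (𝓝 0) := by
    simpa using tendsto_one_half_pow.const_mul K
  obtain ⟨l, hl, hlε⟩ := ((eventually_ge_atTop (m + L + 1)).and
    (small.eventually_lt_const hε)).exists
  exact ⟨(1 / 2) ^ l, by positivity, fun y hy hyx =>
    (hwρ.abs_sub_le_of_chainEDist_le hρ hw (hK y hy x hx l hl hyx)).trans_lt hlε⟩

end

/-! ### Test functions for the capacity -/

/-- `S` has a test function of cost at most `ε`: an a.e. measurable `ψ : X → [0, 1]` which is `1`
on `S`, such that the integrals of `ψ` and of some genuine (not just weak) upper gradient of `ψ`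
add up to at most `ε`. -/
def TestLE (μ : Measure X) (S : Set X) (ε : ℝ≥0∞) : Prop :=
  ∃ (ψ : X → ℝ) (g : X → ℝ≥0∞), AEMeasurable ψ μ ∧ (∀ x, ψ x ∈ Icc 0 1) ∧ (∀ x ∈ S, ψ x = 1) ∧
    IsUpperGradient ψ g ∧ ∫⁻ x, ENNReal.ofReal (ψ x) ∂μ + ∫⁻ x, g x ∂μ ≤ ε

/-- `S` is negligible for the `1`-capacity: it has test functions of arbitrarily small cost. -/
def CapNull (μ : Measure X) (S : Set X) : Prop := ∀ ε : ℝ≥0∞, ε ≠ 0 → TestLE μ S ε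

section

variable {μ : Measure X} {S T : Set X}

omit [BorelSpace X]

theorem TestLE.mono {ε ε' : ℝ≥0∞} (h : TestLE μ T ε) (hST : S ⊆ T) (hε : ε ≤ ε') :
    TestLE μ S ε' := by
  obtain ⟨ψ, g, hψ, hψI, hψT, hg, cost⟩ := h
  exact ⟨ψ, g, hψ, hψI, fun x hx => hψT x (hST hx), hg, cost.trans hε⟩

theorem CapNull.mono (h : CapNull μ T) (hST : S ⊆ T) : CapNull μ S :=
  fun ε hε => (h ε hε).mono hST le_rfl

theorem ofReal_iSup_le_tsum_ofReal {ι : Type*} (f : ι → ℝ) :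
    ENNReal.ofReal (⨆ i, f i) ≤ ∑' i, ENNReal.ofReal (f i) := by
  by_cases htop : ∑' i, ENNReal.ofReal (f i) = ∞
  · exact htop ▸ le_top
  refine ENNReal.ofReal_le_of_le_toReal (Real.iSup_le (fun i => ?_) ENNReal.toReal_nonneg)
  rw [← ENNReal.ofReal_le_iff_le_toReal htop]
  exact ENNReal.le_tsum i

theorem TestLE.iUnion {ι : Type*} [Countable ι] {S : ι → Set X} {ε : ι → ℝ≥0∞}
    (h : ∀ i, TestLE μ (S i) (ε i)) : TestLE μ (⋃ i, S i) (∑' i, ε i) := by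
  choose ψ g hψ hψI hψS hg cost using h
  have hbdd (x) : BddAbove (range fun i => ψ i x) := ⟨1, forall_mem_range.2 fun i => (hψI i x).2⟩
  have sup_le (x) : ⨆ i, ψ i x ≤ 1 := Real.iSup_le (fun i => (hψI i x).2) zero_le_one
  refine ⟨fun x => ⨆ i, ψ i x, fun x => ∑' i, g i x, AEMeasurable.iSup hψ,
    fun x => ⟨Real.iSup_nonneg fun i => (hψI i x).1, sup_le x⟩, fun x hx => ?_,
    .iSup hbdd hg, ?_⟩
  · obtain ⟨i, hi⟩ := mem_iUnion.1 hx
    exact (sup_le x).antisymm ((hψS i x hi).ge.trans (le_ciSup (hbdd x) i))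
  · calc ∫⁻ x, ENNReal.ofReal (⨆ i, ψ i x) ∂μ + ∫⁻ x, ∑' i, g i x ∂μ
        ≤ ∫⁻ x, ∑' i, ENNReal.ofReal (ψ i x) ∂μ + ∫⁻ x, ∑' i, g i x ∂μ := by
          gcongr with x
          exact ofReal_iSup_le_tsum_ofReal _
      _ = ∑' i, (∫⁻ x, ENNReal.ofReal (ψ i x) ∂μ + ∫⁻ x, g i x ∂μ) := by
          rw [lintegral_tsum fun i => (hψ i).ennreal_ofReal,
            lintegral_tsum fun i => (hg i).1.aemeasurable, ENNReal.tsum_add]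
      _ ≤ ∑' i, ε i := ENNReal.tsum_le_tsum cost

theorem CapNull.iUnion {ι : Type*} [Countable ι] {S : ι → Set X} (h : ∀ i, CapNull μ (S i)) :
    CapNull μ (⋃ i, S i) := by
  intro ε hε
  obtain ⟨ε', hε', hsum⟩ := ENNReal.exists_pos_sum_of_countable' hε ι
  exact (TestLE.iUnion fun i => h i (ε' i) (hε' i).ne').mono le_rfl hsum.le

theorem capNull_empty : CapNull μ ∅ := by
  simpa using CapNull.iUnion (μ := μ) (S := fun _ : Empty => ∅) (by simp)

theorem CapNull.union (hS : CapNull μ S) (hT : CapNull μ T) : CapNull μ (S ∪ T) := by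
  rw [union_eq_iUnion]
  exact CapNull.iUnion (Bool.forall_bool.2 ⟨hT, hS⟩)

theorem capNull_of_forall_testLE_mul {K : ℝ≥0∞} (hK : K ≠ ∞)
    (h : ∀ ε : ℝ≥0∞, ε ≠ 0 → TestLE μ S (K * ε)) : CapNull μ S := by
  intro ε hε
  refine (h (ε / (K + 1)) (ENNReal.div_pos hε (by finiteness)).ne').mono le_rfl ?_
  calc K * (ε / (K + 1)) ≤ (K + 1) * (ε / (K + 1)) := by gcongr; exact le_self_add
    _ ≤ ε := ENNReal.mul_div_le

end

/-- The Lipschitz cutoff at scale `d` around `S`: it is `1` within distance `d` of `S` and vanishes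
at distance `2 * d` and beyond. -/
def cutoff (S : Set X) (d : ℝ) (x : X) : ℝ := clamp (2 - infDist x S / d)

section

variable {S : Set X} {d : ℝ} {x : X}

omit [MeasurableSpace X] [BorelSpace X]

theorem cutoff_mem_Icc (S : Set X) (d : ℝ) (x : X) : cutoff S d x ∈ Icc 0 1 := clamp_mem_Icc _

theorem cutoff_of_infDist_le (hd : 0 < d) (h : infDist x S ≤ d) : cutoff S d x = 1 := by
  have : infDist x S / d ≤ 1 := (div_le_one hd).2 h
  exact clamp_of_one_le (by linarith)

theorem cutoff_of_notMem_thickening (hS : S.Nonempty) (hd : 0 < d)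
    (h : x ∉ thickening (2 * d) S) : cutoff S d x = 0 := by
  rw [mem_thickening_iff_infDist_lt hS, not_lt] at h
  exact clamp_of_nonpos (sub_nonpos.2 ((le_div_iff₀ hd).2 h))

theorem abs_cutoff_sub_cutoff_le (S : Set X) (hd : 0 < d) (x y : X) :
    |cutoff S d x - cutoff S d y| ≤ d⁻¹ * dist x y := by
  have hdist : |infDist x S - infDist y S| ≤ dist x y := by
    simpa [Real.dist_eq] using (lipschitz_infDist_pt S).dist_le_mul x y
  calc |cutoff S d x - cutoff S d y|
      ≤ |2 - infDist x S / d - (2 - infDist y S / d)| := abs_clamp_sub_clamp_le _ _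
    _ = d⁻¹ * |infDist x S - infDist y S| := by
        rw [sub_sub_sub_cancel_left, ← sub_div, abs_div, abs_of_pos hd, abs_sub_comm,
          div_eq_inv_mul]
    _ ≤ d⁻¹ * dist x y := by gcongr

theorem continuous_cutoff (S : Set X) (d : ℝ) : Continuous (cutoff S d) :=
  continuous_clamp.comp (continuous_const.sub ((continuous_infDist_pt S).div_const d))

end

section

variable {μ : Measure X}

theorem testLE_closedBall (μ : Measure X) (x : X) {s : ℝ} (hs : 0 < s) :
    TestLE μ (closedBall x s) (μ (ball x (2 * s)) * (1 + (ENNReal.ofReal s)⁻¹)) := by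
  have support (y) (hy : y ∉ ball x (2 * s)) : cutoff {x} s y = 0 :=
    cutoff_of_notMem_thickening (singleton_nonempty x) hs (by rwa [thickening_singleton])
  refine ⟨cutoff {x} s, _, (continuous_cutoff _ _).measurable.aemeasurable,
    cutoff_mem_Icc _ _, fun y hy => cutoff_of_infDist_le hs (by rwa [infDist_singleton]),
    (IsUpperGradient.of_lipschitz (abs_cutoff_sub_cutoff_le _ hs)).indicator_of_isOpen
      isOpen_ball support, ?_⟩
  rw [mul_add, mul_one, lintegral_indicator measurableSet_ball, setLIntegral_const,
    ENNReal.ofReal_inv_of_pos hs, mul_comm (μ _) (ENNReal.ofReal s)⁻¹]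
  gcongr
  rw [← lintegral_indicator_one measurableSet_ball]
  gcongr with y
  by_cases hy : y ∈ ball x (2 * s)
  · simpa [hy] using (cutoff_mem_Icc {x} s y).2
  · simp [support y hy]

theorem Doubling.testLE_closedBall {Cd : ℝ} (hμ : Doubling μ Cd) (x : X) {s : ℝ} (hs : 0 < s)
    (hs1 : s ≤ 1) (n : ℕ) :
    TestLE μ (closedBall x (2 ^ n * s))
      (2 * ENNReal.ofReal Cd ^ (n + 1) * (ENNReal.ofReal s)⁻¹ * μ (ball x s)) := by
  refine (PaperBV.testLE_closedBall μ x (s := 2 ^ n * s) (by positivity)).mono le_rfl ?_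
  have doubling : μ (ball x (2 * (2 ^ n * s))) ≤ ENNReal.ofReal Cd ^ (n + 1) * μ (ball x s) := by
    rw [← mul_assoc, ← pow_succ']
    exact hμ.measure_ball_two_pow_mul_le (n + 1) x s
  have le_radius : s ≤ 2 ^ n * s := le_mul_of_one_le_left hs.le (one_le_pow₀ one_le_two)
  have one_le : 1 ≤ (ENNReal.ofReal s)⁻¹ := by simpa [ENNReal.one_le_inv] using hs1
  calc μ (ball x (2 * (2 ^ n * s))) * (1 + (ENNReal.ofReal (2 ^ n * s))⁻¹)
      ≤ ENNReal.ofReal Cd ^ (n + 1) * μ (ball x s) *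
          ((ENNReal.ofReal s)⁻¹ + (ENNReal.ofReal s)⁻¹) := by gcongr
    _ = 2 * ENNReal.ofReal Cd ^ (n + 1) * (ENNReal.ofReal s)⁻¹ * μ (ball x s) := by ring

theorem exists_isOpen_setLIntegral_lt {ρ : X → ℝ≥0∞} (hρ : ∫⁻ x, ρ x ∂μ ≠ ∞) {S : Set X}
    (hS : μ S = 0) {ε : ℝ≥0∞} (hε : ε ≠ 0) :
    ∃ U, IsOpen U ∧ S ⊆ U ∧ ∫⁻ x in U, ρ x ∂μ < ε := by
  have : IsFiniteMeasure (μ.withDensity ρ) := isFiniteMeasure_withDensity hρ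
  obtain ⟨U, hSU, hU, hlt⟩ := S.exists_isOpen_lt_of_lt (μ := μ.withDensity ρ) ε
    ((withDensity_absolutelyContinuous μ ρ hS).trans_lt (pos_iff_ne_zero.2 hε))
  exact ⟨U, hU, hSU, by rwa [withDensity_apply _ hU.measurableSet] at hlt⟩

end

/-! ### Level sets: coarea and relative isoperimetric inequalities -/

/-- The part in `V` of the approximate perimeter of `{w > t}`, for a function `w` with upper
gradient `ρ`: the lower limit of the averages over `(t, t + 1 / (n + 1))` in the coarea formula. -/
def levelVariation (μ : Measure X) (w : X → ℝ) (ρ : X → ℝ≥0∞) (t : ℝ) (V : Set X) : ℝ≥0∞ :=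
  liminf (fun n : ℕ => ENNReal.ofReal (n + 1) *
    ∫⁻ x in V, (w ⁻¹' Ioo t (t + 1 / (n + 1))).indicator ρ x ∂μ) atTop

section

omit [MetricSpace X] [BorelSpace X]

variable {μ : Measure X} {w : X → ℝ} {ρ : X → ℝ≥0∞}

theorem levelVariation_congr_ae {w' : X → ℝ} (h : w =ᵐ[μ] w') (ρ : X → ℝ≥0∞) (t : ℝ) (V : Set X) :
    levelVariation μ w ρ t V = levelVariation μ w' ρ t V := by
  unfold levelVariation
  congr! 3 with n
  refine lintegral_congr_ae (ae_restrict_of_ae ?_)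
  filter_upwards [h] with x hx
  simp only [indicator, mem_preimage, hx]

theorem measurable_indicator_level (hw : Measurable w) (hρ : Measurable ρ) (a : ℝ) :
    Measurable fun p : ℝ × X => (w ⁻¹' Ioo p.1 (p.1 + a)).indicator ρ p.2 := by
  have : MeasurableSet {p : ℝ × X | p.1 < w p.2 ∧ w p.2 < p.1 + a} := by measurability
  exact (hρ.comp measurable_snd).indicator this

omit [MeasurableSpace X] in
theorem lintegral_indicator_level_le (w : X → ℝ) (ρ : X → ℝ≥0∞) (x : X) (a : ℝ) :
    ∫⁻ t, (w ⁻¹' Ioo t (t + a)).indicator ρ x ≤ ρ x * ENNReal.ofReal a := by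
  calc ∫⁻ t, (w ⁻¹' Ioo t (t + a)).indicator ρ x
      = ∫⁻ t, (Ioo (w x - a) (w x)).indicator (fun _ => ρ x) t := by
        congr! 2 with t
        simp only [indicator, mem_preimage, mem_Ioo, sub_lt_iff_lt_add, and_comm]
    _ ≤ ρ x * ENNReal.ofReal a := by
        rw [lintegral_indicator measurableSet_Ioo, setLIntegral_const, Real.volume_Ioo,
          sub_sub_cancel]

variable [SFinite μ]

theorem measurable_setLIntegral_level (hw : Measurable w) (hρ : Measurable ρ) (a : ℝ)
    (V : Set X) : Measurable fun t => ∫⁻ x in V, (w ⁻¹' Ioo t (t + a)).indicator ρ x ∂μ :=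
  (measurable_indicator_level hw hρ a).lintegral_prod_right' (ν := μ.restrict V)

theorem lintegral_levelVariation_le (hw : Measurable w) (hρ : Measurable ρ) (V : Set X) :
    ∫⁻ t, levelVariation μ w ρ t V ≤ ∫⁻ x in V, ρ x ∂μ := by
  refine (lintegral_liminf_le fun n =>
    (measurable_setLIntegral_level hw hρ _ V).const_mul _).trans ?_
  refine liminf_le_of_frequently_le' (Frequently.of_forall fun n => ?_)
  have hn : ENNReal.ofReal (n + 1) * ENNReal.ofReal (1 / (n + 1)) = 1 := by
    rw [← ENNReal.ofReal_mul (by positivity), mul_one_div_cancel (by positivity),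
      ENNReal.ofReal_one]
  rw [lintegral_const_mul _ (measurable_setLIntegral_level hw hρ _ V),
    lintegral_lintegral_swap (measurable_indicator_level hw hρ _).aemeasurable,
    ← lintegral_const_mul' _ _ ENNReal.ofReal_ne_top]
  gcongr with x
  calc _ ≤ ENNReal.ofReal (n + 1) * (ρ x * ENNReal.ofReal (1 / (n + 1))) := by
        gcongr
        exact lintegral_indicator_level_le w ρ x _
    _ = ρ x := by rw [mul_left_comm, hn, mul_one]

theorem exists_levelVariation_mul_le (hw : AEMeasurable w μ) (hρ : Measurable ρ) (V : Set X)
    {a b : ℝ} (hab : a < b) :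
    ∃ t ∈ Ioo a b, levelVariation μ w ρ t V * ENNReal.ofReal (b - a) ≤ ∫⁻ x in V, ρ x ∂μ := by
  have length_ne : volume (Ioo a b) ≠ 0 := by simpa using hab
  have hmeas : Measurable fun t => levelVariation μ (hw.mk w) ρ t V :=
    .liminf fun n => (measurable_setLIntegral_level hw.measurable_mk hρ _ V).const_mul _
  obtain ⟨t, ht, hle⟩ := exists_le_setLAverage length_ne (by simp) hmeas.aemeasurable
  refine ⟨t, ht, ?_⟩
  rw [levelVariation_congr_ae hw.ae_eq_mk]
  rw [setLAverage_eq, ENNReal.le_div_iff_mul_le (.inl length_ne) (.inl (by simp)),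
    Real.volume_Ioo] at hle
  exact hle.trans ((setLIntegral_le_lintegral _ _).trans
    (lintegral_levelVariation_le hw.measurable_mk hρ V))

omit [SFinite μ] in
theorem tsum_levelVariation_le {t : ℝ} {ι : Type*} [Countable ι] {B : ι → Set X} {U : Set X}
    (hB : ∀ i, MeasurableSet (B i)) (hdisj : Pairwise (Function.onFun Disjoint B))
    (hU : ∀ i, B i ⊆ U) : ∑' i, levelVariation μ w ρ t (B i) ≤ levelVariation μ w ρ t U := by
  let _ : MeasurableSpace ι := ⊤
  rw [← lintegral_count]
  refine (lintegral_liminf_le fun n => measurable_from_top).trans ?_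
  refine liminf_le_liminf (Eventually.of_forall fun n => ?_)
  rw [lintegral_count, ENNReal.tsum_mul_left, ← lintegral_iUnion hB hdisj]
  gcongr
  exact iUnion_subset hU

end

section

variable {μ : Measure X} {Cd : ℝ} {P : ℝ≥0} {L : ℕ} {w : X → ℝ} {ρ : X → ℝ≥0∞}

omit [BorelSpace X] in
theorem IsUpperGradient.exists_clamp_mul_sub (hw : IsUpperGradient w ρ)
    (hm : AEMeasurable w μ) (t : ℝ) {K : ℝ} (hK : 0 < K) {δ : ℝ≥0∞} (hδ : δ ≠ 0) :
    ∃ G, IsUpperGradient (fun x => clamp (K * (w x - t))) G ∧ G =ᵐ[μ] fun x =>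
      ENNReal.ofReal K * ((w ⁻¹' Ioo t (t + 1 / K)).indicator ρ x + δ * ρ x) := by
  have steep : IsUpperGradient (fun x => K * (w x - t)) fun x => ENNReal.ofReal K * ρ x := by
    refine hw.comp_lipschitz (φ := fun a => K * (a - t)) hK.le fun a b => ?_
    rw [← mul_sub, abs_mul, abs_of_pos hK, sub_sub_sub_cancel_right]
  obtain ⟨G, hG, hGae⟩ := steep.exists_clamp_of_aemeasurable ((hm.sub_const t).const_mul K) hδ
  refine ⟨G, hG, hGae.trans (.of_forall fun x => ?_)⟩
  have level_iff : K * (w x - t) ∈ Ioo 0 1 ↔ w x ∈ Ioo t (t + 1 / K) := by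
    rw [mem_Ioo, mem_Ioo, mul_pos_iff_of_pos_left hK, sub_pos, ← lt_div_iff₀' hK,
      sub_lt_iff_lt_add']
  simp only [indicator, mem_preimage, level_iff]
  split_ifs <;> ring

theorem UnitPoincare.measure_ball_le_of_zero_one (hP : UnitPoincare μ P L) {u : X → ℝ}
    (hu : AEMeasurable u μ) (huI : ∀ x, u x ∈ Icc 0 1) {g : X → ℝ≥0∞} (hg : IsUpperGradient u g)
    {q : ℝ≥0∞} {x : X} {r : ℝ} (hr : 0 < r) (h0 : μ (ball x r) ≤ q * μ (ball x r ∩ u ⁻¹' {0}))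
    (h1 : μ (ball x r) ≤ q * μ (ball x r ∩ u ⁻¹' {1})) :
    μ (ball x r) ≤ 2 * q * P * ENNReal.ofReal r * ∫⁻ y in ball x (2 ^ L * r), g y ∂μ := by
  obtain ⟨c, hc⟩ := hP x r hr u g hu huI hg
  have deviation {T : Set X} (hT : ∀ y ∈ T, 1 / 2 ≤ |u y - c|) :
      μ (ball x r ∩ T) ≤ 2 * ∫⁻ y in ball x r, ENNReal.ofReal |u y - c| ∂μ := by
    have markov := mul_meas_ge_le_lintegral₀ (μ := μ.restrict (ball x r))
      (f := fun y => ENNReal.ofReal |u y - c|) (hu.restrict.sub_const c).abs.ennreal_ofReal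
      (ENNReal.ofReal (1 / 2))
    rw [Measure.restrict_apply' measurableSet_ball, one_div,
      ENNReal.ofReal_inv_of_pos two_pos, ENNReal.ofReal_ofNat, mul_comm, ← div_eq_mul_inv,
      ENNReal.div_le_iff two_ne_zero (by simp), mul_comm] at markov
    rw [inter_comm]
    refine (measure_mono (inter_subset_inter_left _ fun y hy => ?_)).trans markov
    simpa using ENNReal.ofReal_le_ofReal (hT y hy)
  obtain ⟨T, hqT, hT⟩ : ∃ T, μ (ball x r) ≤ q * μ (ball x r ∩ T) ∧ ∀ y ∈ T, 1 / 2 ≤ |u y - c| := by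
    rcases le_total c (1 / 2) with hc | hc
    · refine ⟨_, h1, fun y (hy : u y = 1) => ?_⟩
      rw [hy]
      exact le_trans (by linarith) (le_abs_self _)
    · refine ⟨_, h0, fun y (hy : u y = 0) => ?_⟩
      rw [hy, zero_sub, abs_neg]
      exact hc.trans (le_abs_self c)
  calc μ (ball x r) ≤ q * μ (ball x r ∩ T) := hqT
    _ ≤ q * (2 * (P * ENNReal.ofReal r * ∫⁻ y in ball x (2 ^ L * r), g y ∂μ)) := by
        gcongr
        exact (deviation hT).trans (by gcongr)
    _ = 2 * q * P * ENNReal.ofReal r * ∫⁻ y in ball x (2 ^ L * r), g y ∂μ := by ring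

theorem le_mul_of_forall_le_mul_add {a b c K : ℝ≥0∞} (hK : K ≠ ∞) (hc : c ≠ ∞)
    (h : ∀ δ, δ ≠ 0 → a ≤ K * (b + δ * c)) : a ≤ K * b := by
  have hlim : Tendsto (fun δ => K * (b + δ * c)) (𝓝[>] 0) (𝓝 (K * (b + 0 * c))) :=
    (ENNReal.Tendsto.const_mul (tendsto_const_nhds.add
      (ENNReal.Tendsto.mul_const tendsto_id (.inr hc))) (.inr hK)).mono_left nhdsWithin_le_nhds
  simpa using ge_of_tendsto hlim
    (eventually_nhdsWithin_of_forall fun δ (hδ : 0 < δ) => h δ hδ.ne')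

theorem UnitPoincare.measure_ball_le_of_levels (hP : UnitPoincare μ P L) (hw : IsUpperGradient w ρ)
    (hm : AEMeasurable w μ) (hρ : ∫⁻ x, ρ x ∂μ ≠ ∞) {q : ℝ≥0∞} (hq : q ≠ ∞) {x : X} {r : ℝ}
    (hr : 0 < r) {t K : ℝ} (hK : 0 < K) (hlow : μ (ball x r) ≤ q * μ (ball x r ∩ {y | w y ≤ t}))
    (hhigh : μ (ball x r) ≤ q * μ (ball x r ∩ {y | t + 1 / K ≤ w y})) :
    μ (ball x r) ≤ 2 * q * P * ENNReal.ofReal r * (ENNReal.ofReal K *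
      ∫⁻ y in ball x (2 ^ L * r), (w ⁻¹' Ioo t (t + 1 / K)).indicator ρ y ∂μ) := by
  rw [← mul_assoc]
  refine le_mul_of_forall_le_mul_add (c := ∫⁻ y in ball x (2 ^ L * r), ρ y ∂μ) (by finiteness)
    (ne_top_of_le_ne_top hρ (setLIntegral_le_lintegral _ _)) fun δ hδ => ?_
  obtain ⟨G, hG, hGae⟩ := hw.exists_clamp_mul_sub hm t hK hδ
  calc μ (ball x r) ≤ 2 * q * P * ENNReal.ofReal r * ∫⁻ y in ball x (2 ^ L * r), G y ∂μ := by
        refine hP.measure_ball_le_of_zero_one (continuous_clamp.measurable.comp_aemeasurable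
          ((hm.sub_const t).const_mul K)) (fun _ => clamp_mem_Icc _) hG hr
          (hlow.trans ?_) (hhigh.trans ?_) <;> gcongr
        · exact fun y (hy : w y ≤ t) => clamp_of_nonpos
            (mul_nonpos_of_nonneg_of_nonpos hK.le (sub_nonpos.2 hy))
        · exact fun y (hy : t + 1 / K ≤ w y) => clamp_of_one_le
            ((div_le_iff₀' hK).1 (le_sub_iff_add_le'.2 hy))
    _ = _ := by
        rw [lintegral_congr_ae (ae_restrict_of_ae hGae),
          lintegral_const_mul' _ _ ENNReal.ofReal_ne_top,
          lintegral_add_right _ (hw.1.const_mul δ), lintegral_const_mul _ hw.1,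
          ← mul_assoc]

omit [BorelSpace X] in
theorem Doubling.eventually_measure_ball_le_level (hμ : Doubling μ Cd) {q : ℝ≥0∞} (hq : q ≠ ∞)
    {x : X} {r : ℝ} (hr : 0 < r) {t : ℝ} (h : μ (ball x r) ≤ q * μ (ball x r ∩ {y | t < w y})) :
    ∀ᶠ n : ℕ in atTop,
      μ (ball x r) ≤ 2 * q * μ (ball x r ∩ {y | t + 1 / ((n : ℝ) + 1) ≤ w y}) := by
  have exhaust : ⋃ n : ℕ, (ball x r ∩ {y | t + 1 / ((n : ℝ) + 1) ≤ w y}) =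
      ball x r ∩ {y | t < w y} := by
    rw [← inter_iUnion]
    congr 1
    ext y
    refine mem_iUnion.trans ⟨fun ⟨n, hn⟩ => ?_, fun hy => ?_⟩
    · exact (lt_add_of_pos_right t Nat.one_div_pos_of_nat).trans_le hn
    · obtain ⟨n, hn⟩ := exists_nat_one_div_lt (sub_pos.2 (show t < w y from hy))
      exact ⟨n, (lt_sub_iff_add_lt'.1 hn).le⟩
  have mono : Monotone fun n : ℕ => ball x r ∩ {y | t + 1 / ((n : ℝ) + 1) ≤ w y} := by
    intro n m hnm
    refine inter_subset_inter_right _ fun y (hy : _ ≤ w y) => le_trans ?_ hy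
    gcongr
  have hlim := ENNReal.Tendsto.const_mul (tendsto_measure_iUnion_atTop (μ := μ) mono)
    (a := 2 * q) (.inr (by finiteness))
  rw [exhaust] at hlim
  refine (hlim.eventually_const_lt ?_).mono fun n hn => hn.le
  calc μ (ball x r) < 2 * μ (ball x r) := by
        rw [two_mul]
        exact ENNReal.lt_add_right (hμ.measure_ball_ne_top x r) (hμ.measure_ball_ne_zero x hr)
    _ ≤ 2 * q * μ (ball x r ∩ {y | t < w y}) := by rw [mul_assoc]; gcongr

theorem UnitPoincare.measure_ball_le_levelVariation (hP : UnitPoincare μ P L)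
    (hμ : Doubling μ Cd) (hw : IsUpperGradient w ρ) (hm : AEMeasurable w μ)
    (hρ : ∫⁻ x, ρ x ∂μ ≠ ∞) {q : ℝ≥0∞} (hq : q ≠ ∞) {x : X} {r : ℝ} (hr : 0 < r) {t : ℝ}
    (hhigh : μ (ball x r) ≤ q * μ (ball x r ∩ {y | t < w y}))
    (hlow : μ (ball x r) ≤ q * μ (ball x r ∩ {y | w y ≤ t})) :
    μ (ball x r) ≤ 4 * q * P * ENNReal.ofReal r * levelVariation μ w ρ t (ball x (2 ^ L * r)) := by
  rw [levelVariation, ← ENNReal.liminf_const_mul_of_ne_top (by finiteness)]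
  refine le_liminf_of_le (by isBoundedDefault) ?_
  filter_upwards [hμ.eventually_measure_ball_le_level hq hr hhigh] with n hn
  have hlow' : μ (ball x r) ≤ 2 * q * μ (ball x r ∩ {y | w y ≤ t}) := by
    rw [mul_assoc, two_mul]
    exact hlow.trans le_self_add
  calc _ ≤ _ := hP.measure_ball_le_of_levels hw hm hρ (by finiteness) hr (by positivity) hlow' hn
    _ = _ := by ring

end

/-! ### Points where both a sublevel and a superlevel set have positive upper density -/

section

variable {μ : Measure X} {Cd : ℝ}

omit [MetricSpace X] [BorelSpace X] in
theorem measure_le_two_mul_measure_diff {s E : Set X} (hs : μ s ≠ ∞)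
    (h : 2 * μ (s ∩ E) ≤ μ s) : μ s ≤ 2 * μ (s \ E) := by
  refine (ENNReal.add_le_add_iff_left hs).1 ?_
  calc μ s + μ s ≤ 2 * μ (s ∩ E) + 2 * μ (s \ E) := by
        rw [← mul_add, ← two_mul]
        gcongr
        exact measure_le_inter_add_sdiff μ s E
    _ ≤ μ s + 2 * μ (s \ E) := by gcongr

omit [BorelSpace X]

theorem Doubling.one_le_ofReal (hμ : Doubling μ Cd) : 1 ≤ ENNReal.ofReal Cd :=
  ENNReal.one_le_ofReal.2 hμ.1

theorem Doubling.measure_ball_le_inter_of_le (hμ : Doubling μ Cd) {E : Set X} {k : ℝ≥0∞} {x : X}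
    {r s : ℝ} (hrs : r ≤ s) (hsr : s ≤ 2 * r) (h : μ (ball x r) ≤ k * μ (ball x r ∩ E)) :
    μ (ball x s) ≤ k * ENNReal.ofReal Cd * μ (ball x s ∩ E) := by
  calc μ (ball x s) ≤ ENNReal.ofReal Cd * μ (ball x r) :=
        (measure_mono (ball_subset_ball hsr)).trans (hμ.measure_ball_two_mul_le x r)
    _ ≤ ENNReal.ofReal Cd * (k * μ (ball x s ∩ E)) := by
        gcongr
        exact h.trans (by gcongr)
    _ = k * ENNReal.ofReal Cd * μ (ball x s ∩ E) := by ring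

/- Doubling the radius from a scale at which the complement of `E` is dense to a larger one at which
`E` is dense, the first scale at which `E` is dense works. -/
theorem Doubling.exists_measure_ball_le_inter_and_diff (hμ : Doubling μ Cd) {E : Set X}
    {k : ℝ≥0∞} (hk : 1 ≤ k) {x : X}
    (hin : ∃ᶠ r in 𝓝[>] (0 : ℝ), μ (ball x r) ≤ k * μ (ball x r ∩ E))
    (hout : ∃ᶠ r in 𝓝[>] (0 : ℝ), μ (ball x r) ≤ k * μ (ball x r \ E)) {R : ℝ} (hR : 0 < R) :
    ∃ r ∈ Ioo 0 R, μ (ball x r) ≤ 2 * k * ENNReal.ofReal Cd * μ (ball x r ∩ E) ∧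
      μ (ball x r) ≤ 2 * k * ENNReal.ofReal Cd * μ (ball x r \ E) := by
  obtain ⟨r₁, dense₁, hr₁⟩ := (hin.and_eventually (Ioo_mem_nhdsGT (half_pos hR))).exists
  obtain ⟨r₂, dense₂, hr₂⟩ := (hout.and_eventually (Ioo_mem_nhdsGT hr₁.1)).exists
  have hr₂0 : 0 < r₂ := hr₂.1
  obtain ⟨n, hn, hn'⟩ := exists_nat_pow_near ((one_le_div hr₂0).2 hr₂.2.le) one_lt_two
  rw [le_div_iff₀ hr₂0] at hn
  rw [div_lt_iff₀ hr₂0] at hn'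
  have scale_succ (m : ℕ) : (2 : ℝ) ^ (m + 1) * r₂ = 2 * (2 ^ m * r₂) := by ring
  have k_le : k ≤ 2 * k := le_mul_of_one_le_left' one_le_two
  have two_le : 2 ≤ 2 * k := le_mul_of_one_le_right' hk
  have q_ge : 2 * k ≤ 2 * k * ENNReal.ofReal Cd := le_mul_of_one_le_right' hμ.one_le_ofReal
  classical
  have dense_top : μ (ball x (2 ^ (n + 1) * r₂)) ≤
      2 * k * ENNReal.ofReal Cd * μ (ball x (2 ^ (n + 1) * r₂) ∩ E) :=
    hμ.measure_ball_le_inter_of_le hn'.le (by linarith [scale_succ n])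
      (dense₁.trans (by gcongr))
  have hex : ∃ j : ℕ, μ (ball x (2 ^ j * r₂)) ≤
    2 * k * ENNReal.ofReal Cd * μ (ball x (2 ^ j * r₂) ∩ E) := ⟨_, dense_top⟩
  refine ⟨2 ^ Nat.find hex * r₂, ⟨by positivity, ?_⟩, Nat.find_spec hex, ?_⟩
  · calc 2 ^ Nat.find hex * r₂ ≤ 2 ^ (n + 1) * r₂ := by
          gcongr
          exacts [one_le_two, Nat.find_min' hex dense_top]
      _ < R := by linarith [scale_succ n, hr₁.2]
  · rcases hj : Nat.find hex with _ | i
    · rw [pow_zero, one_mul]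
      exact dense₂.trans (by gcongr; exact k_le.trans q_ge)
    · have not_dense := (not_le.1 (Nat.find_min hex (m := i) (by lia))).le
      have compl_dense := measure_le_two_mul_measure_diff (hμ.measure_ball_ne_top x _)
        (le_trans (by gcongr; exact two_le.trans q_ge) not_dense)
      refine hμ.measure_ball_le_inter_of_le (E := Eᶜ) ?_ (scale_succ i).le
        (compl_dense.trans (by gcongr; rfl))
      linarith [scale_succ i, show 0 < 2 ^ i * r₂ by positivity]

end

section

variable {μ : Measure X} {Cd : ℝ} {P : ℝ≥0} {L : ℕ} {w : X → ℝ} {ρ : X → ℝ≥0∞}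

theorem Doubling.testLE_of_forall_exists_ball [SecondCountableTopology X] (hμ : Doubling μ Cd)
    {M : ℝ≥0∞} {S U : Set X} {t : ℝ}
    (h : ∀ x ∈ S, ∃ r, 0 < r ∧ 2 ^ L * r ≤ 1 ∧ closedBall x (2 ^ L * r) ⊆ U ∧
      μ (ball x r) ≤ M * ENNReal.ofReal r * levelVariation μ w ρ t (ball x (2 ^ L * r))) :
    TestLE μ S (2 * ENNReal.ofReal Cd ^ (L + 3) * M * levelVariation μ w ρ t U) := by
  choose! r hr hr1 hrU hμr using h
  obtain ⟨T, hTS, hdisj, hcover⟩ :=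
    Vitali.exists_disjoint_subfamily_covering_enlargement_closedBall S id
      (fun x => 2 ^ L * r x) 1 hr1 4 (by norm_num)
  have radius_pos {x} (hx : x ∈ S) : 0 < 2 ^ L * r x := mul_pos (by positivity) (hr x hx)
  have : Countable T := (hdisj.countable_of_nonempty_interior fun x hx =>
    ⟨x, ball_subset_interior_closedBall (mem_ball_self (radius_pos (hTS hx)))⟩).to_subtype
  have ball_cost (x : T) : TestLE μ (closedBall (x : X) (2 ^ (L + 2) * r x))
      (2 * ENNReal.ofReal Cd ^ (L + 3) * M *
        levelVariation μ w ρ t (ball (x : X) (2 ^ L * r x))) := by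
    have hrx := hr x (hTS x.2)
    have hrx1 : r x ≤ 1 :=
      (le_mul_of_one_le_left hrx.le (one_le_pow₀ one_le_two)).trans (hr1 x (hTS x.2))
    refine (hμ.testLE_closedBall (x : X) hrx hrx1 (L + 2)).mono le_rfl ?_
    calc _ ≤ 2 * ENNReal.ofReal Cd ^ (L + 3) * (ENNReal.ofReal (r x))⁻¹ *
          (M * ENNReal.ofReal (r x) * levelVariation μ w ρ t (ball x (2 ^ L * r x))) := by
          gcongr
          exact hμr x (hTS x.2)
      _ = (ENNReal.ofReal (r x))⁻¹ * ENNReal.ofReal (r x) * (2 * ENNReal.ofReal Cd ^ (L + 3) * M *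
          levelVariation μ w ρ t (ball x (2 ^ L * r x))) := by ring
      _ = _ := by
          rw [ENNReal.inv_mul_cancel (by simpa using hrx) ENNReal.ofReal_ne_top, one_mul]
  refine (TestLE.iUnion ball_cost).mono (fun x hx => ?_) ?_
  · obtain ⟨b, hb, hsub⟩ := hcover x hx
    refine mem_iUnion.2 ⟨⟨b, hb⟩, ?_⟩
    rw [show (2 : ℝ) ^ (L + 2) * r b = 4 * (2 ^ L * r b) by ring]
    exact hsub (mem_closedBall_self (radius_pos hx).le)
  · rw [ENNReal.tsum_mul_left]
    gcongr
    refine tsum_levelVariation_le (fun _ => measurableSet_ball) (fun x y hxy => ?_)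
      fun x => ball_subset_closedBall.trans (hrU x (hTS x.2))
    exact (hdisj x.2 y.2 (Subtype.coe_injective.ne hxy)).mono ball_subset_closedBall
      ball_subset_closedBall

theorem UnitPoincare.exists_ball_levelVariation (hP : UnitPoincare μ P L) (hμ : Doubling μ Cd)
    (hw : IsUpperGradient w ρ) (hm : AEMeasurable w μ) (hρ : ∫⁻ x, ρ x ∂μ ≠ ∞) {t : ℝ} {k : ℝ≥0∞}
    (hk : 1 ≤ k) (hk' : k ≠ ∞) {x : X} {U : Set X} (hU : U ∈ 𝓝 x)
    (hhigh : ∃ᶠ r in 𝓝[>] (0 : ℝ), μ (ball x r) ≤ k * μ (ball x r ∩ {y | t < w y}))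
    (hlow : ∃ᶠ r in 𝓝[>] (0 : ℝ), μ (ball x r) ≤ k * μ (ball x r ∩ {y | w y ≤ t})) :
    ∃ r, 0 < r ∧ 2 ^ L * r ≤ 1 ∧ closedBall x (2 ^ L * r) ⊆ U ∧
      μ (ball x r) ≤ 4 * (2 * k * ENNReal.ofReal Cd) * P * ENNReal.ofReal r *
        levelVariation μ w ρ t (ball x (2 ^ L * r)) := by
  obtain ⟨R, hR, hRU⟩ := Metric.mem_nhds_iff.1 hU
  have sublevel_eq : {y | w y ≤ t} = {y | t < w y}ᶜ := by
    ext y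
    simp
  obtain ⟨r, ⟨hr, hrR⟩, high, low⟩ := hμ.exists_measure_ball_le_inter_and_diff hk hhigh
    (by simpa only [sublevel_eq, ← sdiff_eq] using hlow)
    (R := min R 1 / 2 ^ L) (by positivity)
  rw [lt_div_iff₀' (by positivity)] at hrR
  refine ⟨r, hr, hrR.le.trans (min_le_right _ _),
    (closedBall_subset_ball (hrR.trans_le (min_le_left _ _))).trans hRU,
    hP.measure_ball_le_levelVariation hμ hw hm hρ (by finiteness) hr high ?_⟩
  rwa [sublevel_eq, ← sdiff_eq]

theorem UnitPoincare.capNull_of_frequently_levels [ProperSpace X] (hP : UnitPoincare μ P L)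
    (hμ : Doubling μ Cd) (hw : IsUpperGradient w ρ) (hm : AEMeasurable w μ)
    (hρ : ∫⁻ x, ρ x ∂μ ≠ ∞) {a b : ℝ} (hab : a < b) {k : ℝ≥0∞} (hk : 1 ≤ k) (hk' : k ≠ ∞)
    {S : Set X} (hS : μ S = 0)
    (hhigh : ∀ x ∈ S, ∃ᶠ r in 𝓝[>] (0 : ℝ), μ (ball x r) ≤ k * μ (ball x r ∩ {y | b ≤ w y}))
    (hlow : ∀ x ∈ S, ∃ᶠ r in 𝓝[>] (0 : ℝ), μ (ball x r) ≤ k * μ (ball x r ∩ {y | w y ≤ a})) :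
    CapNull μ S := by
  have := hμ.isLocallyFiniteMeasure
  set M : ℝ≥0∞ := 4 * (2 * k * ENNReal.ofReal Cd) * P
  have length_ne : ENNReal.ofReal (b - a) ≠ 0 := by simpa using hab
  refine capNull_of_forall_testLE_mul
    (K := 2 * ENNReal.ofReal Cd ^ (L + 3) * M * (ENNReal.ofReal (b - a))⁻¹)
    (by finiteness) fun ε hε => ?_
  obtain ⟨U, hU, hSU, hUε⟩ := exists_isOpen_setLIntegral_lt hρ hS hε
  obtain ⟨t, ⟨hat, htb⟩, ht⟩ := exists_levelVariation_mul_le hm hw.1 U hab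
  have balls (x) (hx : x ∈ S) := hP.exists_ball_levelVariation hμ hw hm hρ (t := t) hk hk'
    (hU.mem_nhds (hSU hx))
    ((hhigh x hx).mono fun r hr => hr.trans (by gcongr))
    ((hlow x hx).mono fun r hr => hr.trans (by gcongr))
  refine (hμ.testLE_of_forall_exists_ball balls).mono le_rfl ?_
  rw [mul_assoc _ _ ε, mul_comm _ ε, ← div_eq_mul_inv]
  gcongr
  rw [ENNReal.le_div_iff_mul_le (.inl length_ne) (.inl ENNReal.ofReal_ne_top)]
  exact ht.trans hUε.le

end

/-! ### Points around which a function vanishes on half of every small ball -/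

section

variable {μ : Measure X} {Cd : ℝ}

theorem Doubling.one_le_mul_setLIntegral_inv_measure_ball (hμ : Doubling μ Cd) (y : X) {d : ℝ}
    (hd : 0 < d) : 1 ≤ ENNReal.ofReal Cd * ∫⁻ x in ball y d, (μ (ball x d))⁻¹ ∂μ := by
  rw [← lintegral_const_mul' _ _ ENNReal.ofReal_ne_top]
  calc 1 = ∫⁻ _ in ball y d, (μ (ball y d))⁻¹ ∂μ := by
        rw [setLIntegral_const, ENNReal.inv_mul_cancel (hμ.measure_ball_ne_zero y hd)
          (hμ.measure_ball_ne_top y d)]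
    _ ≤ ∫⁻ x in ball y d, ENNReal.ofReal Cd * (μ (ball x d))⁻¹ ∂μ := by
        refine setLIntegral_mono' measurableSet_ball fun x hx => ?_
        have comparable : μ (ball x d) ≤ ENNReal.ofReal Cd ^ 1 * μ (ball y d) :=
          hμ.measure_ball_le_of_dist_add_le 1 (by linarith [mem_ball'.1 hx])
        rw [pow_one] at comparable
        rw [← div_eq_mul_inv, ENNReal.le_div_iff_mul_le (.inl (hμ.measure_ball_ne_zero x hd))
          (.inl (hμ.measure_ball_ne_top x d)), mul_comm, ← div_eq_mul_inv]
        exact ENNReal.div_le_of_le_mul comparable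

theorem Doubling.setLIntegral_inv_measure_ball_le (hμ : Doubling μ Cd) (y : X) {d : ℝ} (hd : 0 < d)
    (n : ℕ) : ∫⁻ x in ball y (2 ^ n * d), (μ (ball x d))⁻¹ ∂μ ≤ ENNReal.ofReal Cd ^ (n + 1) := by
  have hR : 0 < 2 ^ n * d := by positivity
  have ne_zero := hμ.measure_ball_ne_zero y hR
  have ne_top := hμ.measure_ball_ne_top y (2 ^ n * d)
  calc ∫⁻ x in ball y (2 ^ n * d), (μ (ball x d))⁻¹ ∂μ
      ≤ ∫⁻ _ in ball y (2 ^ n * d),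
          ENNReal.ofReal Cd ^ (n + 1) * (μ (ball y (2 ^ n * d)))⁻¹ ∂μ := by
        refine setLIntegral_mono' measurableSet_ball fun x hx => ?_
        have comparable : μ (ball y (2 ^ n * d)) ≤ ENNReal.ofReal Cd ^ (n + 1) * μ (ball x d) :=
          hμ.measure_ball_le_of_dist_add_le (n + 1) (by
            rw [pow_succ]
            linarith [mem_ball.1 hx])
        rw [← div_eq_mul_inv, ENNReal.le_div_iff_mul_le (.inl ne_zero) (.inl ne_top), mul_comm,
          ← div_eq_mul_inv]
        exact ENNReal.div_le_of_le_mul comparable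
    _ = ENNReal.ofReal Cd ^ (n + 1) := by
        rw [setLIntegral_const, mul_assoc, ENNReal.inv_mul_cancel ne_zero ne_top, mul_one]

variable [SecondCountableTopology X]

theorem Doubling.lintegral_le_of_forall_setLIntegral_ball_le (hμ : Doubling μ Cd)
    {f F : X → ℝ≥0∞} (hf : Measurable f) (hF : Measurable F) {d : ℝ} (hd : 0 < d) {M : ℝ≥0∞}
    (hM : M ≠ ∞) {n : ℕ}
    (h : ∀ x, ∫⁻ y in ball x d, f y ∂μ ≤ M * ∫⁻ y in ball x (2 ^ n * d), F y ∂μ) :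
    ∫⁻ x, f x ∂μ ≤ ENNReal.ofReal Cd ^ (n + 2) * M * ∫⁻ x, F x ∂μ := by
  have := hμ.isLocallyFiniteMeasure
  set C := ENNReal.ofReal Cd
  have hC : C ≠ ∞ := ENNReal.ofReal_ne_top
  set a : X → ℝ≥0∞ := fun x => (μ (ball x d))⁻¹
  have ha : Measurable a := (measurable_measure_ball d).inv
  calc ∫⁻ x, f x ∂μ ≤ ∫⁻ y, C * (f y * ∫⁻ x in ball y d, a x ∂μ) ∂μ := by
        gcongr with y
        rw [mul_left_comm]
        exact le_mul_of_one_le_right' (hμ.one_le_mul_setLIntegral_inv_measure_ball y hd)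
    _ = C * ∫⁻ x, a x * ∫⁻ y in ball x d, f y ∂μ ∂μ := by
        rw [lintegral_const_mul' _ _ hC, lintegral_mul_setLIntegral_ball_comm hf ha]
    _ ≤ C * ∫⁻ x, a x * (M * ∫⁻ y in ball x (2 ^ n * d), F y ∂μ) ∂μ := by
        gcongr with x
        exact h x
    _ = C * (M * ∫⁻ y, F y * ∫⁻ x in ball y (2 ^ n * d), a x ∂μ ∂μ) := by
        simp only [mul_left_comm (a _) M]
        rw [lintegral_const_mul' _ _ hM, lintegral_mul_setLIntegral_ball_comm hF ha]
    _ ≤ C * (M * ∫⁻ y, F y * C ^ (n + 1) ∂μ) := by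
        gcongr with y
        exact hμ.setLIntegral_inv_measure_ball_le y hd n
    _ = C ^ (n + 2) * M * ∫⁻ x, F x ∂μ := by
        rw [lintegral_mul_const' _ _ (by finiteness)]
        ring

theorem Doubling.ae_mem_of_mem_closure (hμ : Doubling μ Cd) {E S : Set X}
    (hE : NullMeasurableSet E μ) {k : ℝ≥0∞} (hk : k ≠ ∞) {d₀ : ℝ} (hd₀ : 0 < d₀)
    (hS : ∀ s ∈ S, ∀ r ∈ Ioo 0 d₀, μ (ball s r) ≤ k * μ (ball s r ∩ E)) :
    ∀ᵐ x ∂μ, x ∈ closure S → x ∈ E := by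
  filter_upwards [hμ.ae_mem_mInterior hE.compl] with x density hxS
  by_contra hxE
  set C := ENNReal.ofReal Cd
  obtain ⟨r, sparse, hr, hrd⟩ := ((hμ.eventually_mul_measure_diff_lt (density hxE)
    (k := C ^ 2 * k) (by finiteness)).and (Ioo_mem_nhdsGT hd₀)).exists
  obtain ⟨s, hs, hxs⟩ := Metric.mem_closure_iff.1 hxS (r / 2) (half_pos hr)
  have inter_subset : ball s (r / 2) ∩ E ⊆ ball x r \ Eᶜ := fun y hy =>
    ⟨ball_subset_ball' (by linarith [dist_comm x s]) hy.1, not_not.2 hy.2⟩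
  refine sparse.not_ge ?_
  calc μ (ball x r) ≤ C ^ 2 * μ (ball s (r / 2)) :=
        hμ.measure_ball_le_of_dist_add_le 2 (by linarith [dist_comm x s])
    _ ≤ C ^ 2 * (k * μ (ball s (r / 2) ∩ E)) := by
        gcongr
        exact hS s hs _ ⟨half_pos hr, by linarith⟩
    _ ≤ C ^ 2 * k * μ (ball x r \ Eᶜ) := by
        rw [mul_assoc]
        gcongr

end

section

variable {μ : Measure X} {Cd : ℝ} {P : ℝ≥0} {L : ℕ} {v : X → ℝ} {ρ : X → ℝ≥0∞} {S : Set X}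

theorem UnitPoincare.setLIntegral_ball_le_of_le_measure_zeros (hP : UnitPoincare μ P L)
    (hv : ∀ x, v x ∈ Icc 0 1) (hm : AEMeasurable v μ) (hvρ : IsUpperGradient v ρ) {s : X} {r : ℝ}
    (hr : 0 < r) (hs : μ (ball s r) ≤ 2 * μ (ball s r ∩ {y | v y = 0})) :
    ∫⁻ x in ball s r, ENNReal.ofReal (v x) ∂μ ≤
      3 * P * ENNReal.ofReal r * ∫⁻ x in ball s (2 ^ L * r), ρ x ∂μ := by
  obtain ⟨c, hc⟩ := hP s r hr v ρ hm hv hvρ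
  set I := ∫⁻ x in ball s r, ENNReal.ofReal |v x - c| ∂μ
  have zeros : NullMeasurableSet (ball s r ∩ {y | v y = 0}) μ :=
    measurableSet_ball.nullMeasurableSet.inter (nullMeasurableSet_eq_fun hm aemeasurable_const)
  have const_le : ENNReal.ofReal |c| * μ (ball s r) ≤ 2 * I := by
    calc ENNReal.ofReal |c| * μ (ball s r)
        ≤ ENNReal.ofReal |c| * (2 * μ (ball s r ∩ {y | v y = 0})) := by gcongr
      _ = 2 * ∫⁻ _ in ball s r ∩ {y | v y = 0}, ENNReal.ofReal |c| ∂μ := by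
          rw [setLIntegral_const]
          ring
      _ = 2 * ∫⁻ x in ball s r ∩ {y | v y = 0}, ENNReal.ofReal |v x - c| ∂μ := by
          congr 1
          refine lintegral_congr_ae ((ae_restrict_mem₀ zeros).mono fun x hx => ?_)
          simp [show v x = 0 from hx.2]
      _ ≤ 2 * I := by
          gcongr
          exact lintegral_mono_set inter_subset_left
  calc ∫⁻ x in ball s r, ENNReal.ofReal (v x) ∂μ
      ≤ ∫⁻ x in ball s r, (ENNReal.ofReal |v x - c| + ENNReal.ofReal |c|) ∂μ := by
        gcongr with x
        simpa [abs_of_nonneg (hv x).1] using ofReal_abs_sub_le (v x) c 0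
    _ = I + ENNReal.ofReal |c| * μ (ball s r) := by
        rw [lintegral_add_right _ measurable_const, setLIntegral_const]
    _ ≤ I + 2 * I := by gcongr
    _ = 3 * I := by ring
    _ ≤ 3 * (P * ENNReal.ofReal r * ∫⁻ x in ball s (2 ^ L * r), ρ x ∂μ) := by gcongr
    _ = 3 * P * ENNReal.ofReal r * ∫⁻ x in ball s (2 ^ L * r), ρ x ∂μ := by ring

theorem UnitPoincare.setLIntegral_thickening_le (hP : UnitPoincare μ P L) (hμ : Doubling μ Cd)
    [SecondCountableTopology X] (hv : ∀ x, v x ∈ Icc 0 1) (hm : AEMeasurable v μ)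
    (hvρ : IsUpperGradient v ρ) {d : ℝ} (hd : 0 < d)
    (hS : ∀ s ∈ S, μ (ball s (4 * d)) ≤ 2 * μ (ball s (4 * d) ∩ {y | v y = 0})) :
    ∫⁻ x in thickening (2 * d) S, ENNReal.ofReal (v x) ∂μ ≤
      12 * ENNReal.ofReal Cd ^ (L + 5) * P * ENNReal.ofReal d *
        ∫⁻ x in thickening (2 ^ (L + 4) * d) S, ρ x ∂μ := by
  obtain ⟨H, hH, -, hHv⟩ := exists_measurable_ge_of_aemeasurable hm.ennreal_ofReal
  set V := thickening (2 * d) S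
  set W := thickening (2 ^ (L + 4) * d) S
  have hV : MeasurableSet V := isOpen_thickening.measurableSet
  have hW : MeasurableSet W := isOpen_thickening.measurableSet
  have one_le : (1 : ℝ) ≤ 2 ^ L := one_le_pow₀ one_le_two
  have on_ball (x) : ∫⁻ y in ball x d, V.indicator H y ∂μ ≤
      3 * P * ENNReal.ofReal (4 * d) * ∫⁻ y in ball x (2 ^ (L + 3) * d), W.indicator ρ y ∂μ := by
    rcases disjoint_or_nonempty_inter (ball x d) V with hdisj | ⟨z, hz, hzV⟩
    · rw [lintegral_indicator hV, Measure.restrict_restrict hV, inter_comm, hdisj.inter_eq]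
      simp
    obtain ⟨s, hs, hzs⟩ := mem_thickening_iff.1 hzV
    have hxs : dist x s < 3 * d := by linarith [dist_triangle x z s, mem_ball'.1 hz]
    calc ∫⁻ y in ball x d, V.indicator H y ∂μ ≤ ∫⁻ y in ball s (4 * d), H y ∂μ :=
          lintegral_mono' (Measure.restrict_mono (ball_subset_ball' (by linarith)) le_rfl)
            fun y => indicator_le_self _ _ _
      _ = ∫⁻ y in ball s (4 * d), ENNReal.ofReal (v y) ∂μ :=
          lintegral_congr_ae (ae_restrict_of_ae hHv)
      _ ≤ 3 * P * ENNReal.ofReal (4 * d) * ∫⁻ y in ball s (2 ^ L * (4 * d)), ρ y ∂μ :=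
          hP.setLIntegral_ball_le_of_le_measure_zeros hv hm hvρ (by positivity) (hS s hs)
      _ ≤ 3 * P * ENNReal.ofReal (4 * d) * ∫⁻ y in ball x (2 ^ (L + 3) * d) ∩ W, ρ y ∂μ := by
          gcongr
          refine subset_inter (ball_subset_ball' ?_)
            ((ball_subset_thickening hs _).trans (thickening_mono ?_ _)) <;>
          rw [pow_add] <;> nlinarith [dist_comm x s]
      _ = _ := by rw [lintegral_indicator hW, Measure.restrict_restrict hW, inter_comm W]
  have global := hμ.lintegral_le_of_forall_setLIntegral_ball_le (hH.indicator hV)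
    (hvρ.1.indicator hW) hd (by finiteness) on_ball
  rw [lintegral_indicator hV, lintegral_indicator hW,
    lintegral_congr_ae (ae_restrict_of_ae hHv), ENNReal.ofReal_mul (by norm_num)] at global
  refine global.trans_eq ?_
  rw [ENNReal.ofReal_ofNat]
  ring

theorem IsUpperGradient.testLE_thickening (hvρ : IsUpperGradient v ρ) (hv : ∀ x, v x ∈ Icc 0 1)
    (hm : AEMeasurable v μ) (hne : S.Nonempty) (hSv : ∀ s ∈ S, v s = 1) {d : ℝ} (hd : 0 < d) :
    TestLE μ S ((1 + ENNReal.ofReal d⁻¹) * ∫⁻ x in thickening (2 * d) S, ENNReal.ofReal (v x) ∂μ +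
      ∫⁻ x in thickening (2 * d) S, ρ x ∂μ) := by
  obtain ⟨H, hH, hvH, hHv⟩ := exists_measurable_ge_of_aemeasurable hm.ennreal_ofReal
  set V := thickening (2 * d) S
  have hV : MeasurableSet V := isOpen_thickening.measurableSet
  have hχ (x) : cutoff S d x ∈ Icc 0 1 := cutoff_mem_Icc S d x
  have support (x) (hx : x ∉ V) : cutoff S d x * v x = 0 := by
    rw [cutoff_of_notMem_thickening hne hd hx, zero_mul]
  have upperGradient := (hvρ.mul_cutoff (inv_nonneg.2 hd.le)
    (fun x => (abs_of_nonneg (hχ x).1).trans_le (hχ x).2) (abs_cutoff_sub_cutoff_le S hd) hH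
    fun x => by simpa only [abs_of_nonneg (hv x).1] using hvH x).indicator_of_isOpen
      isOpen_thickening support
  refine ⟨_, _, (continuous_cutoff S d).measurable.aemeasurable.mul hm, fun x =>
    ⟨mul_nonneg (hχ x).1 (hv x).1, mul_le_one₀ (hχ x).2 (hv x).1 (hv x).2⟩,
    fun s hs => ?_, upperGradient, ?_⟩
  · rw [Pi.mul_apply, hSv s hs, mul_one,
      cutoff_of_infDist_le hd ((infDist_zero_of_mem hs).trans_le hd.le)]
  have mass : ∫⁻ x, ENNReal.ofReal (cutoff S d x * v x) ∂μ ≤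
      ∫⁻ x in V, ENNReal.ofReal (v x) ∂μ := by
    rw [← lintegral_indicator hV]
    refine lintegral_mono fun x => ?_
    by_cases hx : x ∈ V
    · rw [indicator_of_mem hx]
      exact ENNReal.ofReal_le_ofReal (mul_le_of_le_one_left (hv x).1 (hχ x).2)
    · simp [support x hx]
  refine (add_le_add_left mass _).trans_eq ?_
  rw [lintegral_indicator hV, lintegral_add_left hvρ.1,
    lintegral_const_mul' _ _ ENNReal.ofReal_ne_top, lintegral_congr_ae (ae_restrict_of_ae hHv)]
  ring

theorem UnitPoincare.testLE_of_le_measure_zeros (hP : UnitPoincare μ P L) (hμ : Doubling μ Cd)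
    [SecondCountableTopology X] (hv : ∀ x, v x ∈ Icc 0 1) (hm : AEMeasurable v μ)
    (hvρ : IsUpperGradient v ρ) (hne : S.Nonempty) (hSv : ∀ s ∈ S, v s = 1) {d : ℝ} (hd : 0 < d)
    (hd1 : d ≤ 1) (hS : ∀ s ∈ S, μ (ball s (4 * d)) ≤ 2 * μ (ball s (4 * d) ∩ {y | v y = 0})) :
    TestLE μ S ((24 * ENNReal.ofReal Cd ^ (L + 5) * P + 1) *
      ∫⁻ x in thickening (2 ^ (L + 4) * d) S, ρ x ∂μ) := by
  refine (hvρ.testLE_thickening hv hm hne hSv hd).mono le_rfl ?_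
  set J := ∫⁻ x in thickening (2 ^ (L + 4) * d) S, ρ x ∂μ
  have scales : (1 + ENNReal.ofReal d⁻¹) * ENNReal.ofReal d ≤ 2 := by
    rw [add_mul, one_mul, ← ENNReal.ofReal_mul (by positivity), inv_mul_cancel₀ hd.ne',
      ENNReal.ofReal_one, ← one_add_one_eq_two]
    gcongr
    simpa using hd1
  have radius_le : 2 * d ≤ 2 ^ (L + 4) * d := by
    rw [pow_add]
    nlinarith [one_le_pow₀ (n := L) (one_le_two (α := ℝ))]
  calc (1 + ENNReal.ofReal d⁻¹) * ∫⁻ x in thickening (2 * d) S, ENNReal.ofReal (v x) ∂μ +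
        ∫⁻ x in thickening (2 * d) S, ρ x ∂μ
      ≤ (1 + ENNReal.ofReal d⁻¹) *
          (12 * ENNReal.ofReal Cd ^ (L + 5) * P * ENNReal.ofReal d * J) + J := by
        gcongr
        · exact hP.setLIntegral_thickening_le hμ hv hm hvρ hd hS
        · exact lintegral_mono_set (thickening_mono radius_le _)
    _ = 12 * ENNReal.ofReal Cd ^ (L + 5) * P * ((1 + ENNReal.ofReal d⁻¹) * ENNReal.ofReal d) * J +
          J := by ring
    _ ≤ 12 * ENNReal.ofReal Cd ^ (L + 5) * P * 2 * J + J := by gcongr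
    _ = (24 * ENNReal.ofReal Cd ^ (L + 5) * P + 1) * J := by ring

theorem tendsto_setLIntegral_thickening (hρ : ∫⁻ x, ρ x ∂μ ≠ ∞) (S : Set X) :
    Tendsto (fun r => ∫⁻ x in thickening r S, ρ x ∂μ) (𝓝[>] 0)
      (𝓝 (∫⁻ x in closure S, ρ x ∂μ)) := by
  have : IsFiniteMeasure (μ.withDensity ρ) := isFiniteMeasure_withDensity hρ
  have lim := tendsto_measure_thickening (μ := μ.withDensity ρ) (s := S)
    ⟨1, one_pos, measure_ne_top _ _⟩
  rw [withDensity_apply _ isClosed_closure.measurableSet] at lim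
  exact lim.congr fun r => withDensity_apply _ isOpen_thickening.measurableSet

theorem IsUpperGradient.exists_clamp_setLIntegral_closure_le (hμ : Doubling μ Cd)
    [SecondCountableTopology X] (hvρ : IsUpperGradient v ρ) (hm : AEMeasurable v μ) {d₀ : ℝ}
    (hd₀ : 0 < d₀) (hS : ∀ s ∈ S, ∀ r ∈ Ioo 0 d₀, μ (ball s r) ≤ 2 * μ (ball s r ∩ {y | v y ≤ 0}))
    {δ : ℝ≥0∞} (hδ : δ ≠ 0) :
    ∃ G, IsUpperGradient (fun x => clamp (v x)) G ∧ ∫⁻ x, G x ∂μ ≤ (1 + δ) * ∫⁻ x, ρ x ∂μ ∧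
      ∫⁻ x in closure S, G x ∂μ ≤ δ * ∫⁻ x, ρ x ∂μ := by
  obtain ⟨G, hG, hGρ⟩ := hvρ.exists_clamp_of_aemeasurable hm hδ
  have closure_le := hμ.ae_mem_of_mem_closure (nullMeasurableSet_le hm aemeasurable_const)
    ENNReal.ofNat_ne_top hd₀ hS
  refine ⟨G, hG, ?_, ?_⟩
  · rw [← lintegral_const_mul _ hvρ.1]
    refine lintegral_mono_ae (hGρ.mono fun x hx => ?_)
    rw [hx, add_mul, one_mul]
    exact add_le_add_left (indicator_le_self _ _ _) _
  · calc ∫⁻ x in closure S, G x ∂μ = ∫⁻ x in closure S, δ * ρ x ∂μ := by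
          refine setLIntegral_congr_fun_ae isClosed_closure.measurableSet ?_
          filter_upwards [hGρ, closure_le] with x hx hle hxS
          rw [hx, indicator_of_notMem fun h => (hle hxS).not_gt h.1, zero_add]
      _ ≤ δ * ∫⁻ x, ρ x ∂μ := by
          rw [lintegral_const_mul _ hvρ.1]
          gcongr
          exact Measure.restrict_le_self

theorem UnitPoincare.capNull_of_forall_le_measure_nonpos (hP : UnitPoincare μ P L)
    (hμ : Doubling μ Cd) [SecondCountableTopology X] (hvρ : IsUpperGradient v ρ)
    (hm : AEMeasurable v μ) (hρ : ∫⁻ x, ρ x ∂μ ≠ ∞) (hSv : ∀ s ∈ S, 1 ≤ v s) {d₀ : ℝ}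
    (hd₀ : 0 < d₀)
    (hS : ∀ s ∈ S, ∀ r ∈ Ioo 0 d₀, μ (ball s r) ≤ 2 * μ (ball s r ∩ {y | v y ≤ 0})) :
    CapNull μ S := by
  rcases S.eq_empty_or_nonempty with rfl | hne
  · exact capNull_empty
  refine capNull_of_forall_testLE_mul (K := 24 * ENNReal.ofReal Cd ^ (L + 5) * P + 1)
    (by finiteness) fun ε hε => ?_
  obtain ⟨δ, hδ, hδε⟩ := ENNReal.exists_nnreal_pos_mul_lt hρ hε
  obtain ⟨G, hG, G_le, G_closure⟩ :=
    hvρ.exists_clamp_setLIntegral_closure_le hμ hm hd₀ hS (δ := δ) (by simpa using hδ.ne')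
  have hGi : ∫⁻ x, G x ∂μ ≠ ∞ := ne_top_of_le_ne_top (by finiteness) G_le
  have cheap := eventually_nhdsGT_zero_mul_left (x := (2 : ℝ) ^ (L + 4)) (by positivity)
    ((tendsto_setLIntegral_thickening hGi S).eventually_lt_const (G_closure.trans_lt hδε))
  have small : 0 < min 1 (d₀ / 4) := by positivity
  obtain ⟨d, hdε, hd, hd'⟩ := (cheap.and (Ioo_mem_nhdsGT small)).exists
  obtain ⟨hd1, hd4⟩ := lt_min_iff.1 hd'
  refine (hP.testLE_of_le_measure_zeros hμ (fun x => clamp_mem_Icc _)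
    (continuous_clamp.measurable.comp_aemeasurable hm) hG hne
    (fun s hs => clamp_of_one_le (hSv s hs)) hd hd1.le fun s hs => ?_).mono le_rfl (by gcongr)
  refine (hS s hs (4 * d) ⟨by positivity, by linarith⟩).trans ?_
  gcongr
  exact clamp_of_nonpos

end

/-! ### Points of positive upper density at which an admissible function is less than one -/

section

variable {μ : Measure X} {Cd : ℝ} {P : ℝ≥0} {L : ℕ} {A : Set X} {k : ℝ≥0∞} {w : X → ℝ}
  {ρ : X → ℝ≥0∞}

section

omit [BorelSpace X]

theorem Doubling.exists_frequently_of_mem_mInterior (hμ : Doubling μ Cd) {x : X}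
    (hx : x ∈ mInterior μ A) :
    ∃ k : ℕ, ∃ᶠ r in 𝓝[>] (0 : ℝ), μ (ball x r) ≤ (k + 1) * μ (ball x r ∩ A) := by
  refine ⟨1, Eventually.frequently ?_⟩
  filter_upwards [hμ.eventually_mul_measure_diff_lt hx (k := 2) (by finiteness)] with r hr
  rw [Nat.cast_one, one_add_one_eq_two, ← sdiff_compl]
  exact measure_le_two_mul_measure_diff (hμ.measure_ball_ne_top x r) hr.le

theorem Doubling.exists_frequently_of_mem_mBoundary (hμ : Doubling μ Cd) {x : X}
    (hx : x ∈ mBoundary μ A) :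
    ∃ k : ℕ, ∃ᶠ r in 𝓝[>] (0 : ℝ), μ (ball x r) ≤ (k + 1) * μ (ball x r ∩ A) := by
  obtain ⟨k, hk⟩ := ENNReal.exists_inv_nat_lt hx.1.ne'
  have dense := frequently_lt_of_lt_limsup (by isBoundedDefault) hk
  refine ⟨k, (dense.and_eventually self_mem_nhdsWithin).mono fun r ⟨hr, hr0⟩ => ?_⟩
  have inv_lt : ((k + 1 : ℝ≥0∞))⁻¹ < μ (ball x r ∩ A) / μ (ball x r) :=
    (ENNReal.inv_le_inv.2 le_self_add).trans_lt hr
  rw [ENNReal.lt_div_iff_mul_lt (.inl (hμ.measure_ball_ne_zero x hr0))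
    (.inl (hμ.measure_ball_ne_top x r)), mul_comm, ← div_eq_mul_inv] at inv_lt
  exact ((ENNReal.div_lt_iff (by simp) (.inl (by finiteness))).1 inv_lt).le.trans_eq (mul_comm _ _)

end

theorem Doubling.measure_eq_zero_of_frequently [SecondCountableTopology X] (hμ : Doubling μ Cd)
    {E S : Set X} (hE : NullMeasurableSet E μ) (hSE : S ⊆ E) (hk : k ≠ ∞)
    (hS : ∀ x ∈ S, ∃ᶠ r in 𝓝[>] (0 : ℝ), μ (ball x r) ≤ k * μ (ball x r \ E)) : μ S = 0 := by
  rw [measure_eq_zero_iff_ae_notMem]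
  filter_upwards [hμ.ae_mem_mInterior hE] with x hx hxS
  obtain ⟨r, dense, sparse⟩ := ((hS x hxS).and_eventually
    (hμ.eventually_mul_measure_diff_lt (hx (hSE hxS)) hk)).exists
  exact sparse.not_ge dense

theorem UnitPoincare.capNull_of_not_frequently_sublevel [ProperSpace X]
    (hP : UnitPoincare μ P L) (hμ : Doubling μ Cd) (hwρ : IsUpperGradient w ρ)
    (hm : AEMeasurable w μ) (hρ : ∫⁻ x, ρ x ∂μ ≠ ∞) {S : Set X} (hS : ∀ x ∈ S, w x ≤ 0)
    (hlow : ∀ x ∈ S, ¬ ∃ᶠ r in 𝓝[>] (0 : ℝ),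
      μ (ball x r) ≤ 2 * μ (ball x r ∩ {y | w y ≤ 1 / 2})) :
    CapNull μ S := by
  have double : IsUpperGradient (fun x => 1 - 2 * w x) fun x => ENNReal.ofReal 2 * ρ x :=
    hwρ.comp_lipschitz (φ := fun a => 1 - 2 * a) zero_le_two fun a b => by
      rw [sub_sub_sub_cancel_left, ← mul_sub, abs_mul, abs_two, abs_sub_comm]
  have double_integrable : ∫⁻ x, ENNReal.ofReal 2 * ρ x ∂μ ≠ ∞ := by
    rw [lintegral_const_mul' _ _ ENNReal.ofReal_ne_top]
    finiteness
  have uniform (m : ℕ) : CapNull μ {x ∈ S | ∀ r ∈ Ioo (0 : ℝ) (1 / (m + 1)),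
      μ (ball x r) ≤ 2 * μ (ball x r ∩ {y | 1 - 2 * w y ≤ 0})} :=
    hP.capNull_of_forall_le_measure_nonpos hμ double (by fun_prop) double_integrable
      (fun x hx => by linarith [hS x hx.1]) (by positivity) fun x hx => hx.2
  refine (CapNull.iUnion uniform).mono fun x hx => ?_
  obtain ⟨d, hd, hd'⟩ := mem_nhdsGT_iff_exists_Ioo_subset.1 (not_frequently.1 (hlow x hx))
  obtain ⟨m, hmd⟩ := exists_nat_one_div_lt (mem_Ioi.1 hd)
  refine mem_iUnion.2 ⟨m, hx, fun r hr => ?_⟩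
  have sparse := (not_le.1 (hd' ⟨hr.1, hr.2.trans hmd⟩)).le
  refine (measure_le_two_mul_measure_diff (hμ.measure_ball_ne_top x r) sparse).trans ?_
  gcongr
  refine fun y hy => ⟨hy.1, ?_⟩
  have : 1 / 2 < w y := not_le.1 hy.2
  exact mem_ofPred.2 (by linarith)

theorem UnitPoincare.capNull_zeros_of_frequently [ProperSpace X] (hP : UnitPoincare μ P L)
    (hμ : Doubling μ Cd) (hρ : LowerSemicontinuous ρ) (hρi : ∫⁻ x, ρ x ∂μ ≠ ∞)
    (hw : ∀ x, w x ∈ Icc 0 1) (hwρ : IsUpperGradient w ρ) (hA : ∀ x ∈ A, w x = 1)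
    (hk : 1 ≤ k) (hk' : k ≠ ∞) :
    CapNull μ {x | w x = 0 ∧ ∃ᶠ r in 𝓝[>] (0 : ℝ), μ (ball x r) ≤ k * μ (ball x r ∩ A)} := by
  set N := {x | w x = 0 ∧ ∃ᶠ r in 𝓝[>] (0 : ℝ), μ (ball x r) ≤ k * μ (ball x r ∩ A)}
  set E := {y | w y ≤ 1 / 2}
  have hm : AEMeasurable w μ := hwρ.aemeasurable hP hμ hρ hρi hw
  have A_subset : A ⊆ Eᶜ := fun y hy (hyE : w y ≤ 1 / 2) => by norm_num [hA y hy] at hyE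
  have N_null : μ N = 0 := by
    refine hμ.measure_eq_zero_of_frequently (E := E)
      (nullMeasurableSet_le hm aemeasurable_const) (fun x hx => ?_) hk' fun x hx => ?_
    · norm_num [E, hx.1]
    · exact hx.2.mono fun r hr => hr.trans (by rw [sdiff_eq]; gcongr)
  set F := {x | ∃ᶠ r in 𝓝[>] (0 : ℝ), μ (ball x r) ≤ 2 * μ (ball x r ∩ E)}
  have inter_F : CapNull μ (N ∩ F) := by
    refine hP.capNull_of_frequently_levels hμ hwρ hm hρi one_half_lt_one (k := 2 * k)
      (hk.trans (le_mul_of_one_le_left' one_le_two)) (by finiteness)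
      (measure_mono_null inter_subset_left N_null) (fun x hx => hx.1.2.mono fun r hr => ?_)
      fun x hx => hx.2.mono fun r hr => ?_
    · refine hr.trans ?_
      gcongr
      exacts [le_mul_of_one_le_left' one_le_two, fun y hy => (hA y hy).ge]
    · exact hr.trans (by gcongr; exact le_mul_of_one_le_right' hk)
  have diff_F : CapNull μ (N \ F) := hP.capNull_of_not_frequently_sublevel hμ hwρ hm hρi
    (fun x hx => hx.1.1.le) fun x hx => hx.2
  simpa only [inter_union_sdiff] using inter_F.union diff_F

theorem UnitPoincare.capNull_abs_lt_one [ProperSpace X] (hP : UnitPoincare μ P L)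
    (hμ : Doubling μ Cd) {u : X → ℝ} (hρ : LowerSemicontinuous ρ) (hρi : ∫⁻ x, ρ x ∂μ ≠ ∞)
    (huρ : IsUpperGradient u ρ) (hA : ∀ x ∈ A, 1 ≤ u x) :
    CapNull μ {x | |u x| < 1 ∧
      ∃ k : ℕ, ∃ᶠ r in 𝓝[>] (0 : ℝ), μ (ball x r) ≤ (k + 1) * μ (ball x r ∩ A)} := by
  set φ : ℕ → ℝ → ℝ := fun n a => clamp ((n + 1) * (|a| - 1) + 1)
  have truncation (n k : ℕ) : CapNull μ {x | φ n (u x) = 0 ∧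
      ∃ᶠ r in 𝓝[>] (0 : ℝ), μ (ball x r) ≤ (k + 1) * μ (ball x r ∩ A)} := by
    have hn : (0 : ℝ) ≤ n + 1 := by positivity
    have lipschitz (a b) : |φ n a - φ n b| ≤ (n + 1) * |a - b| := by
      refine (abs_clamp_sub_clamp_le _ _).trans ?_
      rw [add_sub_add_right_eq_sub, ← mul_sub, sub_sub_sub_cancel_right, abs_mul, abs_of_nonneg hn]
      exact mul_le_mul_of_nonneg_left (abs_abs_sub_abs_le a b) hn
    have lsc : LowerSemicontinuous fun x => ENNReal.ofReal (n + 1) * ρ x :=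
      (ENNReal.continuous_const_mul ENNReal.ofReal_ne_top).comp_lowerSemicontinuous hρ
        fun a b hab => mul_le_mul_right hab _
    refine hP.capNull_zeros_of_frequently hμ lsc ?_ (fun x => clamp_mem_Icc _)
      (huρ.comp_lipschitz hn lipschitz) (fun x hx => ?_) le_add_self (by finiteness)
    · rw [lintegral_const_mul' _ _ ENNReal.ofReal_ne_top]
      finiteness
    · have : 1 ≤ |u x| := (hA x hx).trans (le_abs_self _)
      exact clamp_of_one_le (le_add_of_nonneg_left (mul_nonneg hn (sub_nonneg.2 this)))
  refine (CapNull.iUnion fun n => CapNull.iUnion fun k => truncation n k).mono ?_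
  rintro x ⟨hx, k, hk⟩
  obtain ⟨n, hn⟩ := exists_nat_one_div_lt (sub_pos.2 hx)
  rw [div_lt_iff₀' (by positivity)] at hn
  exact mem_iUnion₂.2 ⟨n, k, clamp_of_nonpos (by linarith), hk⟩

end

/-! ### Newtonian functions -/

section

variable {μ : Measure X} {u ψ : X → ℝ} {g gψ : X → ℝ≥0∞}

theorem IsWeakUpperGradientOn.exists_lowerSemicontinuous [μ.WeaklyRegular]
    (h : IsWeakUpperGradientOn μ u g univ) (hg : ∫⁻ x, g x ∂μ ≠ ∞) :
    ∃ ρ : X → ℝ≥0∞, LowerSemicontinuous ρ ∧ ∫⁻ x, ρ x ∂μ ≠ ∞ ∧ IsUpperGradient u ρ := by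
  obtain ⟨hgm, κ, hκ, hκi, hκγ⟩ := h
  obtain ⟨G, hG, hgG, hGg⟩ := exists_measurable_ge_of_aemeasurable hgm
  obtain ⟨ρ, le_ρ, hρ, ρ_le⟩ := exists_le_lowerSemicontinuous_lintegral_ge μ (fun x => G x + κ x)
    (hG.add hκ) one_ne_zero
  have hκi' := hκi.ne
  rw [lintegral_add_left hG, lintegral_congr_ae hGg] at ρ_le
  refine ⟨ρ, hρ, ne_top_of_le_ne_top (by finiteness) ρ_le, hρ.measurable, fun γ => ?_⟩
  by_cases hγ : UGIneq u g γ
  · exact hγ.trans (lintegral_mono fun t => (hgG _).trans (le_self_add.trans (le_ρ _)))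
  · have integral_eq_top : γ.integral ρ = ∞ := by
      rw [eq_top_iff, ← hκγ γ ⟨fun t _ => mem_univ _, hγ⟩]
      exact lintegral_mono fun t => le_add_self.trans (le_ρ _)
    exact le_top.trans_eq integral_eq_top.symm

theorem MemN11.exists_lowerSemicontinuous [μ.WeaklyRegular] (hu : MemN11 μ univ u) :
    ∃ ρ : X → ℝ≥0∞, LowerSemicontinuous ρ ∧ ∫⁻ x, ρ x ∂μ ≠ ∞ ∧ IsUpperGradient u ρ := by
  obtain ⟨g, hg⟩ := iInf_lt_iff.1 (ENNReal.add_lt_top.1 hu).2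
  obtain ⟨hug, hgi⟩ := iInf_lt_iff.1 hg
  rw [setLIntegral_univ] at hgi
  exact hug.exists_lowerSemicontinuous hgi.ne

theorem IsWeakUpperGradientOn.abs_add (h : IsWeakUpperGradientOn μ u g univ)
    (hψ : IsUpperGradient ψ gψ) :
    IsWeakUpperGradientOn μ (fun x => |u x| + ψ x) (fun x => g x + gψ x) univ := by
  obtain ⟨hgm, κ, hκ, hκi, hκγ⟩ := h
  refine ⟨hgm.add hψ.1.aemeasurable, κ, hκ, hκi, fun γ hγ => hκγ γ ⟨hγ.1, fun hc => hγ.2 ?_⟩⟩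
  have integral_add :
      γ.integral (fun x => g x + gψ x) = γ.integral g + γ.integral gψ := by
    simp only [Curve.integral_eq_setLIntegral_Ioc]
    exact lintegral_add_right' _ (γ.aemeasurable_comp hψ.1)
  unfold UGIneq at hc ⊢
  rw [integral_add]
  refine le_trans ?_ (add_le_add hc (hψ.2 γ))
  rw [← ENNReal.ofReal_add (abs_nonneg _) (abs_nonneg _), add_sub_add_comm]
  exact ENNReal.ofReal_le_ofReal
    ((abs_add_le _ _).trans (add_le_add_left (abs_abs_sub_abs_le _ _) _))

theorem nNorm_abs_add_le (hψm : AEMeasurable ψ μ) (hψ0 : ∀ x, 0 ≤ ψ x)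
    (hψ : IsUpperGradient ψ gψ) :
    NNorm μ univ (fun x => |u x| + ψ x) ≤
      NNorm μ univ u + (∫⁻ x, ENNReal.ofReal (ψ x) ∂μ + ∫⁻ x, gψ x ∂μ) := by
  unfold NNorm
  rw [add_add_add_comm]
  refine add_le_add (le_of_eq ?_) ?_
  · simp only [setLIntegral_univ]
    rw [← lintegral_add_right' _ hψm.ennreal_ofReal]
    refine lintegral_congr fun x => ?_
    rw [abs_of_nonneg (add_nonneg (abs_nonneg _) (hψ0 x)),
      ENNReal.ofReal_add (abs_nonneg _) (hψ0 x)]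
  · simp only [setLIntegral_univ, ENNReal.iInf_add]
    refine le_iInf₂ fun g hg => iInf₂_le_of_le _ (hg.abs_add hψ) ?_
    rw [lintegral_add_right _ hψ.1]

omit [BorelSpace X] in
theorem capa1_le_nNorm (hu : MemN11 μ univ u) {B : Set X} (hB : ∀ x ∈ B, 1 ≤ u x) :
    capa1 μ B ≤ NNorm μ univ u :=
  iInf_le_of_le u (iInf₂_le hu hB)

theorem capa1_le_nNorm_of_capNull (hu : MemN11 μ univ u) {B : Set X}
    (hB : CapNull μ {x ∈ B | |u x| < 1}) : capa1 μ B ≤ NNorm μ univ u := by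
  refine ENNReal.le_of_forall_pos_le_add fun ε hε _ => ?_
  obtain ⟨ψ, g, hψm, hψI, hψB, hψg, cost⟩ := hB ε (by simpa using hε.ne')
  have norm_le : NNorm μ univ (fun x => |u x| + ψ x) ≤ NNorm μ univ u + ε :=
    (nNorm_abs_add_le hψm (fun x => (hψI x).1) hψg).trans (by gcongr)
  have one_le (x) (hx : x ∈ B) : 1 ≤ |u x| + ψ x := by
    rcases lt_or_ge |u x| 1 with hlt | hge
    · linarith [hψB x ⟨hx, hlt⟩, abs_nonneg (u x)]
    · linarith [(hψI x).1]
  have mem : MemN11 μ univ fun x => |u x| + ψ x :=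
    norm_le.trans_lt (ENNReal.add_lt_top.2 ⟨hu, ENNReal.coe_lt_top⟩)
  exact (capa1_le_nNorm mem one_le).trans norm_le

end

/-- For any `A ⊆ X`, `capa₁(I_A ∪ ∂*A) ≤ capa₁(A)`, where `I_A` is
the measure-theoretic interior and `∂*A` the measure-theoretic boundary of `A`. -/
theorem capa_mInterior_union_mBoundary_le
    (μ : Measure X) (hcomp : CompleteSpace X)
    (hdoub : ∃ Cd : ℝ, Doubling μ Cd) (hpoin : ∃ CP lam : ℝ, Poincare μ CP lam)
    (A : Set X) :
    capa1 μ (mInterior μ A ∪ mBoundary μ A) ≤ capa1 μ A := by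
  obtain ⟨Cd, hμ⟩ := hdoub
  obtain ⟨CP, lam, hPoincare⟩ := hpoin
  obtain ⟨L, hP⟩ := hPoincare.exists_unitPoincare hμ
  have := hμ.properSpace
  have := hμ.isLocallyFiniteMeasure
  refine le_iInf fun u => le_iInf₂ fun hu huA => capa1_le_nNorm_of_capNull hu ?_
  obtain ⟨ρ, hρ, hρi, huρ⟩ := hu.exists_lowerSemicontinuous
  refine (hP.capNull_abs_lt_one hμ hρ hρi huρ huA).mono fun x ⟨hx, hux⟩ => ⟨hux, ?_⟩
  exact hx.elim hμ.exists_frequently_of_mem_mInterior hμ.exists_frequently_of_mem_mBoundary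

end PaperBV
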